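/- arXiv:2106.09615 — 2 statements merged into one kernel-verified Lean document; each statement's English description precedes it below -/
import Mathlib

section
/- There exist absolute constants C1, C2, C3 > 0 with the following property. Let p ≥ 16 be a prime and let γ ∈ F_p^* have multiplicative order at least exp(C1·log p / log log p). Consider the Markov chain (X_n) on F_p^* started from an arbitrary fixed X_0 ∈ F_p^*, whose one-step transition from a state x moves to f_*(x)·ε, where ε is drawn uniformly from {1, γ^{-1}, γ}. Then for every c > 0 and every integer n ≥ c·exp(log p / log log p), one has (1/2)·max_{A ⊆ F_p^*} |P(X_n ∈ A) − |A|/(p−1)| ≤ C2·e^{−C3·c}. -/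
/-
Let `p < 2 ^ d`. By the pigeonhole principle `γ` is a root modulo `p` of a nonzero polynomial `P`
of degree less than `d` with coefficients in `{-1, 0, 1}`. If the minimal representatives of
`ξ γ ^ j` were all at most `p / (2 d)` in absolute value for polynomially (in `d`) many `j`, they
would satisfy the recurrence `P` over `ℤ`. For a prime `q` of polynomial size, `P(X ^ q) ≡ P ^ q`
modulo `q` then yields a multiple of `ξ` with representatives half as large, and iterating `d`
times is absurd. The order of `γ` exceeds `d ^ 3`, so the powers `γ ^ q` are distinct and `q` can
be chosen with `P(γ ^ q) ≠ 0`, which keeps the multiples nonzero.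

In the coordinate `y = x⁻¹` the map `f_*` is the reflection `y ↦ 1 - y`; conjugating multiplication
by `γ` with it gives the translation by `1 - γ`, and then those by `γ ^ j (1 - γ)`. As every
nonzero frequency sees one of these translations, Fourier analysis bounds the variance of a
function by its Dirichlet energy along multiplication by `γ` before and after composing with `f_*`.
Two consecutive steps of the chain dissipate a fixed proportion of this energy, so the chain mixes
in polylogarithmic time.
-/

open scoped BigOperators

/-- The distribution of the Markov chain after `n` steps: the `n`-fold bind of
`step` applied to the point mass at `x0`. -/
noncomputable def walkDist {S : Type*} (step : S → PMF S) (x0 : S) : ℕ → PMF S :=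
  fun n => (fun μ : PMF S => μ.bind step)^[n] (PMF.pure x0)

section SequenceShift

open Polynomial

/-- The left shift `(r₀, r₁, …) ↦ (r₁, r₂, …)` on sequences. Evaluating an integer polynomial at it
expresses linear recurrences as `aeval (seqShift ℤ) P r = 0`. -/
def seqShift (R : Type*) [CommRing R] : Module.End R (ℕ → R) := LinearMap.funLeft R R Nat.succ

variable {R : Type*} [CommRing R]

lemma seqShift_pow_apply (k : ℕ) (r : ℕ → R) (i : ℕ) : (seqShift R ^ k) r i = r (i + k) := by
  induction k generalizing i with
  | zero => rfl
  | succ k ih =>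
    rw [pow_succ', Module.End.mul_apply, seqShift, LinearMap.funLeft_apply, ← seqShift, ih]
    congr 1
    omega

lemma aeval_seqShift_pow_apply {G : R[X]} {n : ℕ} (hG : G.natDegree < n) (q : ℕ) (r : ℕ → R)
    (j : ℕ) :
    aeval (seqShift R ^ q) G r j = ∑ i ∈ Finset.range n, G.coeff i * r (j + q * i) := by
  simp [aeval_eq_sum_range' hG, LinearMap.sum_apply, ← pow_mul, seqShift_pow_apply]

lemma aeval_seqShift_apply {G : R[X]} {n : ℕ} (hG : G.natDegree < n) (r : ℕ → R) (j : ℕ) :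
    aeval (seqShift R) G r j = ∑ i ∈ Finset.range n, G.coeff i * r (j + i) := by
  simpa using aeval_seqShift_pow_apply hG 1 r j

lemma aeval_seqShift_mul_apply_eq_zero {P G : R[X]} {r : ℕ → R} {j N : ℕ} (hG : G.natDegree ≤ N)
    (hP : ∀ i ≤ N, aeval (seqShift R) P r (j + i) = 0) :
    aeval (seqShift R) (G * P) r j = 0 := by
  rw [map_mul, Module.End.mul_apply, aeval_seqShift_apply (Nat.lt_succ_of_le hG)]
  exact Finset.sum_eq_zero fun i hi => by rw [hP i (Finset.mem_range_succ_iff.1 hi), mul_zero]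

lemma intCast_aeval_seqShift_of_geometric {K : Type*} [CommRing K] {r : ℕ → ℤ} {a g : K}
    (hr : ∀ i, (r i : K) = a * g ^ i) (G : ℤ[X]) (j : ℕ) :
    ((aeval (seqShift ℤ) G r j : ℤ) : K) = a * aeval g G * g ^ j := by
  rw [aeval_seqShift_apply (Nat.lt_succ_self _), aeval_eq_sum_range, Finset.mul_sum,
    Finset.sum_mul, Int.cast_sum]
  refine Finset.sum_congr rfl fun i _ => ?_
  rw [Int.cast_mul, hr, zsmul_eq_mul]
  ring

lemma natAbs_aeval_seqShift_pow_le {P : ℤ[X]} {d b : ℕ} (hdeg : P.natDegree < d)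
    (hcoeff : ∀ i, (P.coeff i).natAbs ≤ 1) {q j : ℕ} {r : ℕ → ℤ}
    (hr : ∀ i < d, (r (j + q * i)).natAbs ≤ b) :
    (aeval (seqShift ℤ ^ q) P r j).natAbs ≤ d * b := by
  rw [aeval_seqShift_pow_apply hdeg]
  calc (∑ i ∈ Finset.range d, P.coeff i * r (j + q * i)).natAbs
      ≤ ∑ i ∈ Finset.range d, (P.coeff i * r (j + q * i)).natAbs := Int.natAbs_sum_le _ _
    _ ≤ ∑ _i ∈ Finset.range d, b := Finset.sum_le_sum fun i hi => by
        rw [Int.natAbs_mul]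
        simpa using Nat.mul_le_mul (hcoeff i) (hr i (Finset.mem_range.1 hi))
    _ = d * b := by simp

end SequenceShift

section Descent

open Polynomial

lemma exists_expand_eq_pow_add_smul {q : ℕ} (hq : q.Prime) (P : ℤ[X]) :
    ∃ G : ℤ[X], expand ℤ q P = P ^ q + (q : ℤ) • G := by
  have := Fact.mk hq
  have hmap : (expand ℤ q P - P ^ q).map (Int.castRingHom (ZMod q)) = 0 := by
    rw [Polynomial.map_sub, map_expand, Polynomial.map_pow, ZMod.expand_card, sub_self]
  have hdvd : C (q : ℤ) ∣ expand ℤ q P - P ^ q := by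
    refine (C_dvd_iff_dvd_coeff _ _).2 fun i => (ZMod.intCast_zmod_eq_zero_iff_dvd _ _).1 ?_
    simpa only [coeff_map, coeff_zero, eq_intCast] using congrArg (coeff · i) hmap
  obtain ⟨G, hG⟩ := hdvd
  exact ⟨G, by rw [smul_eq_C_mul, ← hG, add_sub_cancel]⟩

lemma natAbs_valMinAbs_intCast_le (p : ℕ) [NeZero p] (z : ℤ) :
    (z : ZMod p).valMinAbs.natAbs ≤ z.natAbs :=
  ZMod.natAbs_min_of_le_div_two p _ _ (by simp) (ZMod.natAbs_valMinAbs_le _)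

lemma zmod_natCast_ne_zero_of_prime_of_lt {p q : ℕ} (hq : q.Prime) (hqp : q < p) :
    (q : ZMod p) ≠ 0 := fun h =>
  Nat.not_dvd_of_pos_of_lt hq.pos hqp ((ZMod.natCast_eq_zero_iff _ _).1 h)

variable {p : ℕ} {γ : ZMod p} {P : ℤ[X]} {d : ℕ}

lemma aeval_seqShift_eq_zero_of_natAbs_le (hdeg : P.natDegree < d)
    (hcoeff : ∀ i, (P.coeff i).natAbs ≤ 1) (hroot : aeval γ P = 0) {r : ℕ → ℤ} {ξ : ZMod p}
    (hr : ∀ i, (r i : ZMod p) = ξ * γ ^ i) {b j : ℕ} (hb : d * b < p)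
    (hsmall : ∀ i < d, (r (j + i)).natAbs ≤ b) : aeval (seqShift ℤ) P r j = 0 := by
  have hdvd : (p : ℤ) ∣ aeval (seqShift ℤ) P r j := by
    rw [← ZMod.intCast_zmod_eq_zero_iff_dvd, intCast_aeval_seqShift_of_geometric hr, hroot,
      mul_zero, zero_mul]
  have hbound : (aeval (seqShift ℤ) P r j).natAbs ≤ d * b := by
    simpa using natAbs_aeval_seqShift_pow_le (q := 1) hdeg hcoeff (by simpa using hsmall)
  exact Int.eq_zero_of_dvd_of_natAbs_lt_natAbs hdvd (by simpa using hbound.trans_lt hb)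

variable [Fact p.Prime]

/- The sequence of minimal representatives `r` of `ξ γ ^ i` satisfies the recurrence `P` over `ℤ`,
hence the recurrence `P ^ q`; since `P(X ^ q) ≡ P ^ q` modulo `q`, the integer
`∑ i, P_i r (k + q i)` is divisible by `q`, and the quotient is small. -/
lemma natAbs_valMinAbs_mul_pow_le_half (hdeg : P.natDegree < d)
    (hcoeff : ∀ i, (P.coeff i).natAbs ≤ 1) (hroot : aeval γ P = 0) {q : ℕ} (hq : q.Prime)
    (hdq : 2 * d ≤ q) (hqp : q < p) {ξ : ZMod p} {b N : ℕ} (hb : d * b < p)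
    (hsmall : ∀ j ≤ N + q * d, (ξ * γ ^ j).valMinAbs.natAbs ≤ b) {k : ℕ} (hk : k ≤ N) :
    (ξ * (aeval (γ ^ q) P / q) * γ ^ k).valMinAbs.natAbs ≤ b / 2 := by
  set r : ℕ → ℤ := fun i => (ξ * γ ^ i).valMinAbs
  have hr : ∀ i, (r i : ZMod p) = ξ * γ ^ i := fun i => ZMod.coe_valMinAbs _
  have hqd : (q - 1) * d + d = q * d := by
    rw [← Nat.succ_mul, Nat.succ_eq_add_one, Nat.sub_add_cancel hq.one_le]
  have hrec : ∀ j ≤ (q - 1) * d, aeval (seqShift ℤ) P r (k + j) = 0 := fun j hj =>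
    aeval_seqShift_eq_zero_of_natAbs_le hdeg hcoeff hroot hr hb fun i hi =>
      hsmall _ (by omega)
  obtain ⟨G, hG⟩ := exists_expand_eq_pow_add_smul hq P
  have hpow : aeval (seqShift ℤ) (P ^ q) r k = 0 := by
    rw [← Nat.sub_add_cancel hq.one_le, pow_succ]
    exact aeval_seqShift_mul_apply_eq_zero
      (natDegree_pow_le.trans (Nat.mul_le_mul_left _ hdeg.le)) hrec
  have hdiv : aeval (seqShift ℤ ^ q) P r k = q * aeval (seqShift ℤ) G r k := by
    rw [← expand_aeval, hG, map_add, map_smul, LinearMap.add_apply, Pi.add_apply, hpow, zero_add,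
      LinearMap.smul_apply, Pi.smul_apply, smul_eq_mul]
  have hcast : ξ * (aeval (γ ^ q) P / q) * γ ^ k = (aeval (seqShift ℤ) G r k : ℤ) := by
    have hq0 := zmod_natCast_ne_zero_of_prime_of_lt hq hqp
    have hGγ : aeval (γ ^ q) P = q * aeval γ G := by
      rw [← expand_aeval, hG, map_add, map_pow, hroot, zero_pow hq.ne_zero, zero_add, map_smul,
        zsmul_eq_mul, Int.cast_natCast]
    rw [intCast_aeval_seqShift_of_geometric hr, hGγ, mul_div_cancel_left₀ _ hq0]
  have hsize : q * (aeval (seqShift ℤ) G r k).natAbs ≤ d * b := by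
    rw [← Int.natAbs_natCast q, ← Int.natAbs_mul, ← hdiv]
    refine natAbs_aeval_seqShift_pow_le hdeg hcoeff fun i hi => hsmall _ ?_
    have := Nat.mul_le_mul_left q hi.le
    omega
  rw [hcast]
  refine (natAbs_valMinAbs_intCast_le p _).trans ((Nat.le_div_iff_mul_le two_pos).2 ?_)
  refine Nat.le_of_mul_le_mul_left (hsize.trans' ?_) (Nat.zero_lt_of_lt hdeg)
  calc d * ((aeval (seqShift ℤ) G r k).natAbs * 2)
      = 2 * d * (aeval (seqShift ℤ) G r k).natAbs := by ring
    _ ≤ q * (aeval (seqShift ℤ) G r k).natAbs := Nat.mul_le_mul_right _ hdq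

lemma exists_lt_natAbs_valMinAbs_mul_pow (hdeg : P.natDegree < d)
    (hcoeff : ∀ i, (P.coeff i).natAbs ≤ 1) (hroot : aeval γ P = 0) {q : ℕ} (hq : q.Prime)
    (hdq : 2 * d ≤ q) (hqp : q < p) (hne : aeval (γ ^ q) P ≠ 0) (t : ℕ) {ξ : ZMod p} (hξ : ξ ≠ 0)
    {b : ℕ} (hb : d * b < p) (hbt : b < 2 ^ t) :
    ∃ j ≤ t * (q * d), b < (ξ * γ ^ j).valMinAbs.natAbs := by
  induction t generalizing ξ b with
  | zero =>
    refine ⟨0, by omega, ?_⟩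
    rw [pow_zero, Nat.lt_one_iff] at hbt
    simpa [hbt, Int.natAbs_pos] using hξ
  | succ t ih =>
    by_contra! hsmall
    have hξ' : ξ * (aeval (γ ^ q) P / q) ≠ 0 :=
      mul_ne_zero hξ (div_ne_zero hne (zmod_natCast_ne_zero_of_prime_of_lt hq hqp))
    obtain ⟨j, hj, hlarge⟩ := ih hξ' (b := b / 2)
      ((Nat.mul_le_mul_left d (Nat.div_le_self b 2)).trans_lt hb)
      (Nat.div_lt_of_lt_mul (by rwa [← pow_succ']))
    refine hlarge.not_ge (natAbs_valMinAbs_mul_pow_le_half hdeg hcoeff hroot hq hdq hqp hb ?_ hj)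
    rwa [← Nat.succ_mul]

variable (γ) in
lemma exists_polynomial_aeval_eq_zero_of_lt_two_pow (hp : p < 2 ^ d) :
    ∃ P : ℤ[X], P.natDegree < d ∧ (∀ i, (P.coeff i).natAbs ≤ 1) ∧ aeval γ P = 0 ∧
      P.map (Int.castRingHom (ZMod p)) ≠ 0 := by
  obtain ⟨S, hS, T, hT, hST, hsum⟩ := Finset.exists_ne_map_eq_of_card_lt_of_maps_to
    (s := (Finset.range d).powerset) (t := (Finset.univ : Finset (ZMod p)))
    (f := fun S => ∑ i ∈ S, γ ^ i) (by simpa [ZMod.card] using hp) (fun _ _ => by simp)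
  set f : Finset ℕ → ℤ[X] := fun S => ∑ i ∈ S, X ^ i with hf
  have hcoeff : ∀ S i, (f S).coeff i = if i ∈ S then 1 else 0 := fun S i => by
    simp [hf, coeff_X_pow]
  have hzero : ∀ U ∈ (Finset.range d).powerset, ∀ i, d ≤ i → (f U).coeff i = 0 :=
    fun U hU i hi => by
      rw [hcoeff, if_neg fun h => hi.not_gt (Finset.mem_range.1 (Finset.mem_powerset.1 hU h))]
  have hmap : (f S - f T).map (Int.castRingHom (ZMod p)) ≠ 0 := by
    refine fun h => hST (Finset.ext fun i => ?_)
    have := congrArg (coeff · i) h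
    simp only [coeff_map, coeff_sub, hcoeff, coeff_zero] at this
    by_cases hiS : i ∈ S <;> by_cases hiT : i ∈ T <;> simp [hiS, hiT] at this ⊢
  refine ⟨f S - f T, ?_, fun i => ?_, ?_, hmap⟩
  · refine (natDegree_lt_iff_degree_lt fun h => hmap (by rw [h, Polynomial.map_zero])).2
      ((degree_lt_iff_coeff_zero _ _).2 fun i hi => ?_)
    rw [coeff_sub, hzero S hS i hi, hzero T hT i hi, sub_zero]
  · rw [coeff_sub, hcoeff, hcoeff]
    split_ifs <;> decide
  · simpa [hf, sub_eq_zero] using hsum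

lemma exists_lt_natAbs_valMinAbs_mul_pow_of_card_primes (hp : p < 2 ^ d) {Q : ℕ}
    (hQ : Q < orderOf γ) (hprimes : d ≤ ((Finset.Icc (2 * d) Q).filter Nat.Prime).card)
    {ξ : ZMod p} (hξ : ξ ≠ 0) :
    ∃ j ≤ d * (Q * d), p / (2 * d) < (ξ * γ ^ j).valMinAbs.natAbs := by
  obtain ⟨P, hdeg, hcoeff, hroot, hmap⟩ := exists_polynomial_aeval_eq_zero_of_lt_two_pow γ hp
  set primes := (Finset.Icc (2 * d) Q).filter Nat.Prime
  have hQp : Q < p := hQ.trans (ZMod.orderOf_lt (Fact.out : p.Prime).one_lt γ)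
  obtain ⟨q, hq, hne⟩ : ∃ q ∈ primes, aeval (γ ^ q) P ≠ 0 := by
    by_contra! hall
    have hinj : Set.InjOn (γ ^ ·) (primes : Set ℕ) := pow_injOn_Iio_orderOf.mono fun q hq =>
      (Finset.mem_Icc.1 (Finset.mem_filter.1 hq).1).2.trans_lt hQ
    have hroots : primes.image (γ ^ ·) ⊆ (P.map (Int.castRingHom (ZMod p))).roots.toFinset := by
      refine Finset.image_subset_iff.2 fun q hq => ?_
      rw [Multiset.mem_toFinset, mem_roots hmap, IsRoot.def, eval_map]
      exact hall q hq
    have hcard := calc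
      primes.card = (primes.image (γ ^ ·)).card := (Finset.card_image_of_injOn hinj).symm
      _ ≤ (P.map (Int.castRingHom (ZMod p))).roots.toFinset.card := Finset.card_le_card hroots
      _ ≤ (P.map (Int.castRingHom (ZMod p))).roots.card := Multiset.toFinset_card_le _
      _ ≤ (P.map (Int.castRingHom (ZMod p))).natDegree := card_roots' _
      _ ≤ P.natDegree := natDegree_map_le
    omega
  obtain ⟨⟨hdq, hqQ⟩, hqprime⟩ : (2 * d ≤ q ∧ q ≤ Q) ∧ q.Prime := by simpa [primes] using hq
  have hb : d * (p / (2 * d)) < p := by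
    have := Nat.mul_div_le p (2 * d)
    have := (Fact.out : p.Prime).pos
    lia
  obtain ⟨j, hj, hlarge⟩ := exists_lt_natAbs_valMinAbs_mul_pow hdeg hcoeff hroot hqprime hdq
    (hqQ.trans_lt hQp) hne d hξ (b := p / (2 * d)) hb
    ((Nat.div_le_self p _).trans_lt hp)
  exact ⟨j, hj.trans (by gcongr), hlarge⟩

end Descent

section PrimeCounting

lemma primeCounting_le_card_filter_prime_Icc_add (m n : ℕ) :
    n.primeCounting ≤ ((Finset.Icc m n).filter Nat.Prime).card + m := by
  rw [Nat.primeCounting, Nat.primeCounting', Nat.count_eq_card_filter_range]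
  calc ((Finset.range (n + 1)).filter Nat.Prime).card
      ≤ (((Finset.Icc m n).filter Nat.Prime) ∪ Finset.range m).card := by
        refine Finset.card_le_card fun x hx => ?_
        simp only [Finset.mem_filter, Finset.mem_range, Finset.mem_union, Finset.mem_Icc] at hx ⊢
        lia
    _ ≤ ((Finset.Icc m n).filter Nat.Prime).card + (Finset.range m).card :=
        Finset.card_union_le _ _
    _ = ((Finset.Icc m n).filter Nat.Prime).card + m := by rw [Finset.card_range]

lemma three_mul_le_primeCounting_pow_three {d : ℕ} (hd : 20 ≤ d) :
    3 * d ≤ (d ^ 3).primeCounting := by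
  have hd' : (20 : ℝ) ≤ d := by exact_mod_cast hd
  have hlog : Real.log d ≤ d - 1 := Real.log_le_sub_one_of_pos (by linarith)
  have hlog_pos : 0 < Real.log d := Real.log_pos (by linarith)
  have hlog_cube : Real.log ((d : ℝ) ^ 3 + 1) ≤ 3 * d := calc
    Real.log ((d : ℝ) ^ 3 + 1) ≤ Real.log ((d + 1 : ℝ) ^ 3) :=
        Real.log_le_log (by positivity) (by nlinarith)
    _ = 3 * Real.log (d + 1) := by rw [Real.log_pow]; norm_num
    _ ≤ 3 * d := by
        linarith [Real.log_le_sub_one_of_pos (by linarith : (0 : ℝ) < d + 1)]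
  have hreal : (3 * d : ℝ) ≤ (d ^ 3).primeCounting := by
    refine le_trans ?_ (Chebyshev.pi_ge (d ^ 3))
    push_cast
    rw [Real.log_pow, Nat.cast_ofNat, le_div_iff₀ (by positivity)]
    nlinarith [mul_nonneg (by linarith : (0 : ℝ) ≤ d - 20) (sq_nonneg (d : ℝ)),
      mul_le_mul_of_nonneg_left hlog (by linarith : (0 : ℝ) ≤ 9 * d),
      mul_le_mul_of_nonneg_left Real.log_two_gt_d9.le (by positivity : (0 : ℝ) ≤ (d : ℝ) ^ 3)]
  exact_mod_cast hreal

lemma le_card_filter_prime_Icc_two_mul_pow_three {d : ℕ} (hd : 20 ≤ d) :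
    d ≤ ((Finset.Icc (2 * d) (d ^ 3)).filter Nat.Prime).card := by
  have := primeCounting_le_card_filter_prime_Icc_add (2 * d) (d ^ 3)
  have := three_mul_le_primeCounting_pow_three hd
  lia

end PrimeCounting

section Fourier

open scoped ZMod

variable {N : ℕ} [NeZero N]

lemma four_mul_abs_valMinAbs_div_le_norm_stdAddChar_sub_one (z : ZMod N) :
    4 * |(z.valMinAbs : ℝ)| / N ≤ ‖ZMod.stdAddChar z - 1‖ := by
  have hN : (0 : ℝ) < N := Nat.cast_pos.2 (NeZero.pos N)
  set r : ℝ := (z.valMinAbs : ℝ) with hr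
  have hrN : |r| ≤ N / 2 := by
    have h := (Nat.cast_le (α := ℝ)).2 (ZMod.natAbs_valMinAbs_le z)
    rw [Nat.cast_natAbs, Int.cast_abs] at h
    exact h.trans Nat.cast_div_le
  have hangle : |2 * Real.pi * r / N / 2| = Real.pi * |r| / N := by
    rw [abs_div, abs_div, abs_mul, abs_of_pos hN, abs_of_pos Real.two_pi_pos, abs_two]
    ring
  have hle : |2 * Real.pi * r / N / 2| ≤ Real.pi / 2 := by
    rw [hangle, div_le_iff₀ hN]
    calc Real.pi * |r| ≤ Real.pi * (N / 2) := by gcongr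
      _ = Real.pi / 2 * N := by ring
  calc 4 * |r| / N = 2 * (2 / Real.pi * |2 * Real.pi * r / N / 2|) := by
        rw [hangle]
        field_simp
        ring
    _ ≤ 2 * |Real.sin (2 * Real.pi * r / N / 2)| := by
        gcongr
        exact Real.mul_abs_le_abs_sin hle
    _ = ‖Complex.exp (Complex.I * (2 * Real.pi * r / N : ℝ)) - 1‖ := by
        rw [Complex.norm_exp_I_mul_ofReal_sub_one, norm_mul, Real.norm_ofNat, Real.norm_eq_abs]
    _ = ‖ZMod.stdAddChar z - 1‖ := by
        conv_rhs => rw [← ZMod.coe_valMinAbs z, ZMod.stdAddChar_coe]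
        congr 3
        push_cast [hr]
        ring

lemma sum_norm_sq_dft (Φ : ZMod N → ℂ) : ∑ k, ‖𝓕 Φ k‖ ^ 2 = N * ∑ j, ‖Φ j‖ ^ 2 := by
  have hconj (k : ZMod N) : (starRingEnd ℂ) (𝓕 Φ k) =
      ∑ j, ZMod.stdAddChar (-(k * -j)) * (starRingEnd ℂ) (Φ j) := by
    simp only [ZMod.dft_apply, smul_eq_mul, map_sum, map_mul, ← AddChar.map_neg_eq_conj]
    exact Finset.sum_congr rfl fun j _ => by rw [mul_neg, mul_comm k]
  have hcomplex : ∑ k, (starRingEnd ℂ) (𝓕 Φ k) * 𝓕 Φ k =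
      N * ∑ j, (starRingEnd ℂ) (Φ j) * Φ j := calc
    _ = ∑ j, (starRingEnd ℂ) (Φ j) * 𝓕 (𝓕 Φ) (-j) := by
        simp only [hconj, Finset.sum_mul, ZMod.dft_apply (𝓕 Φ), Finset.mul_sum, smul_eq_mul]
        rw [Finset.sum_comm]
        refine Finset.sum_congr rfl fun j _ => Finset.sum_congr rfl fun k _ => by ring
    _ = _ := by
        simp only [ZMod.dft_dft, neg_neg, smul_eq_mul, Finset.mul_sum, mul_left_comm]
  simp only [Complex.conj_mul'] at hcomplex
  exact_mod_cast hcomplex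

lemma dft_comp_add_right_sub (Φ : ZMod N → ℂ) (t k : ZMod N) :
    𝓕 (fun y => Φ (y + t) - Φ y) k = (ZMod.stdAddChar (k * t) - 1) * 𝓕 Φ k := by
  have htranslate : ∑ y, ZMod.stdAddChar (-(y * k)) * Φ (y + t) =
      ZMod.stdAddChar (k * t) * ∑ y, ZMod.stdAddChar (-(y * k)) * Φ y := by
    rw [Finset.mul_sum]
    refine Fintype.sum_equiv (Equiv.addRight t) _ _ fun y => ?_
    rw [Equiv.coe_addRight, ← mul_assoc, ← AddChar.map_add_eq_mul]
    ring_nf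
  simp only [ZMod.dft_apply, smul_eq_mul, mul_sub, Finset.sum_sub_distrib, htranslate]
  ring

lemma sq_mul_sum_norm_sq_le_sum_norm_sq_translate_sub {ι : Type*} {s : Finset ι} {t : ι → ZMod N}
    {δ : ℝ} (hδ : 0 ≤ δ) (ht : ∀ k ≠ 0, ∃ i ∈ s, δ ≤ ‖ZMod.stdAddChar (k * t i) - 1‖)
    {Φ : ZMod N → ℂ} (hΦ : ∑ y, Φ y = 0) :
    δ ^ 2 * ∑ y, ‖Φ y‖ ^ 2 ≤ ∑ i ∈ s, ∑ y, ‖Φ (y + t i) - Φ y‖ ^ 2 := by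
  have hN : (0 : ℝ) < N := Nat.cast_pos.2 (NeZero.pos N)
  have hfreq (k : ZMod N) : δ ^ 2 * ‖𝓕 Φ k‖ ^ 2 ≤
      ∑ i ∈ s, ‖𝓕 (fun y => Φ (y + t i) - Φ y) k‖ ^ 2 := by
    rcases eq_or_ne k 0 with rfl | hk
    · rw [ZMod.dft_apply_zero, hΦ, norm_zero, zero_pow two_ne_zero, mul_zero]
      positivity
    · obtain ⟨i, hi, hδi⟩ := ht k hk
      refine le_trans ?_ (Finset.single_le_sum
        (f := fun i => ‖𝓕 (fun y => Φ (y + t i) - Φ y) k‖ ^ 2) (fun _ _ => sq_nonneg _) hi)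
      rw [dft_comp_add_right_sub, norm_mul, mul_pow]
      gcongr
  refine le_of_mul_le_mul_left ?_ hN
  calc N * (δ ^ 2 * ∑ y, ‖Φ y‖ ^ 2) = ∑ k, δ ^ 2 * ‖𝓕 Φ k‖ ^ 2 := by
        rw [← Finset.mul_sum, sum_norm_sq_dft, mul_left_comm]
    _ ≤ ∑ k, ∑ i ∈ s, ‖𝓕 (fun y => Φ (y + t i) - Φ y) k‖ ^ 2 :=
        Finset.sum_le_sum fun k _ => hfreq k
    _ = N * ∑ i ∈ s, ∑ y, ‖Φ (y + t i) - Φ y‖ ^ 2 := by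
        rw [Finset.sum_comm, Finset.mul_sum]
        exact Finset.sum_congr rfl fun i _ => sum_norm_sq_dft _

end Fourier

section DirichletEnergy

variable {α : Type*} [Fintype α]

/-- The Dirichlet energy of a real function along a permutation `σ`: the quadratic form attached to
the graph with edges `x — σ x`. -/
def dirichletEnergy (σ : Equiv.Perm α) (g : α → ℝ) : ℝ := ∑ x, (g (σ x) - g x) ^ 2

variable (σ τ : Equiv.Perm α) (g : α → ℝ)

lemma dirichletEnergy_nonneg : 0 ≤ dirichletEnergy σ g :=
  Finset.sum_nonneg fun _ _ => sq_nonneg _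

lemma dirichletEnergy_inv : dirichletEnergy σ⁻¹ g = dirichletEnergy σ g := by
  rw [dirichletEnergy, ← Equiv.sum_comp σ, dirichletEnergy]
  exact Finset.sum_congr rfl fun x _ => by rw [Equiv.Perm.inv_def, Equiv.symm_apply_apply]; ring

lemma dirichletEnergy_conj : dirichletEnergy (τ * σ * τ⁻¹) g = dirichletEnergy σ (g ∘ τ) := by
  rw [dirichletEnergy, ← Equiv.sum_comp τ]
  simp only [Equiv.Perm.mul_apply, Equiv.Perm.inv_def, Equiv.symm_apply_apply, dirichletEnergy,
    Function.comp_apply]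

lemma dirichletEnergy_mul_le :
    dirichletEnergy (σ * τ) g ≤ 2 * (dirichletEnergy σ g + dirichletEnergy τ g) := by
  rw [dirichletEnergy, dirichletEnergy, ← Equiv.sum_comp τ fun x => (g (σ x) - g x) ^ 2,
    dirichletEnergy, ← Finset.sum_add_distrib, Finset.mul_sum]
  refine Finset.sum_le_sum fun x _ => ?_
  rw [Equiv.Perm.mul_apply]
  calc (g (σ (τ x)) - g x) ^ 2 = ((g (σ (τ x)) - g (τ x)) + (g (τ x) - g x)) ^ 2 := by ring
    _ ≤ _ := add_sq_le

lemma dirichletEnergy_pow_le (j : ℕ) :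
    dirichletEnergy (σ ^ j) g ≤ j ^ 2 * dirichletEnergy σ g := by
  have hpoint (x : α) : (g ((σ ^ j) x) - g x) ^ 2 ≤
      j * ∑ i ∈ Finset.range j, (g (σ ((σ ^ i) x)) - g ((σ ^ i) x)) ^ 2 := by
    have htelescope := Finset.sum_range_sub (fun i => g ((σ ^ i) x)) j
    simp only [pow_succ', Equiv.Perm.mul_apply, pow_zero, Equiv.Perm.one_apply] at htelescope
    simpa [← htelescope] using sq_sum_le_card_mul_sum_sq (s := Finset.range j)
      (f := fun i => g (σ ((σ ^ i) x)) - g ((σ ^ i) x))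
  calc dirichletEnergy (σ ^ j) g
      ≤ ∑ x, j * ∑ i ∈ Finset.range j, (g (σ ((σ ^ i) x)) - g ((σ ^ i) x)) ^ 2 :=
        Finset.sum_le_sum fun x _ => hpoint x
    _ = j * ∑ _i ∈ Finset.range j, dirichletEnergy σ g := by
        rw [← Finset.mul_sum, Finset.sum_comm]
        congr 1
        exact Finset.sum_congr rfl fun i _ =>
          Equiv.sum_comp (σ ^ i) fun y => (g (σ y) - g y) ^ 2
    _ = j ^ 2 * dirichletEnergy σ g := by
        rw [Finset.sum_const, Finset.card_range, nsmul_eq_mul]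
        ring

end DirichletEnergy

section TranslationEnergy

variable {K : Type*} [Field K]

lemma mulLeft₀_pow_apply {γ : K} (hγ : γ ≠ 0) (j : ℕ) (y : K) :
    (Equiv.mulLeft₀ γ hγ ^ j) y = γ ^ j * y := by
  induction j with
  | zero => simp
  | succ j ih =>
    rw [pow_succ', Equiv.Perm.mul_apply, ih, Equiv.mulLeft₀_apply, pow_succ', mul_assoc]

lemma addRight_one_sub_eq {γ : K} (hγ : γ ≠ 0) :
    (Equiv.addRight (1 - γ) : Equiv.Perm K) =
      Equiv.subLeft 1 * Equiv.mulLeft₀ γ hγ * (Equiv.subLeft 1)⁻¹ * (Equiv.mulLeft₀ γ hγ)⁻¹ := by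
  rw [eq_mul_inv_iff_mul_eq, eq_mul_inv_iff_mul_eq]
  ext y
  simp only [Equiv.Perm.mul_apply, Equiv.coe_addRight, Equiv.mulLeft₀_apply, Equiv.subLeft_apply]
  ring

lemma addRight_pow_mul_eq {γ : K} (hγ : γ ≠ 0) (j : ℕ) (t : K) :
    (Equiv.addRight (γ ^ j * t) : Equiv.Perm K) =
      Equiv.mulLeft₀ γ hγ ^ j * Equiv.addRight t * (Equiv.mulLeft₀ γ hγ ^ j)⁻¹ := by
  rw [eq_mul_inv_iff_mul_eq]
  ext y
  simp only [Equiv.Perm.mul_apply, Equiv.coe_addRight, mulLeft₀_pow_apply]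
  ring

variable [Fintype K] {γ : K} (hγ : γ ≠ 0) (h : K → ℝ)

lemma dirichletEnergy_addRight_one_sub_le :
    dirichletEnergy (Equiv.addRight (1 - γ)) h ≤ 2 * (dirichletEnergy (Equiv.mulLeft₀ γ hγ) h +
      dirichletEnergy (Equiv.mulLeft₀ γ hγ) (h ∘ Equiv.subLeft 1)) := by
  rw [addRight_one_sub_eq hγ]
  refine (dirichletEnergy_mul_le _ _ h).trans_eq ?_
  rw [dirichletEnergy_conj, dirichletEnergy_inv, add_comm]

lemma dirichletEnergy_addRight_pow_mul_one_sub_le (j : ℕ) :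
    dirichletEnergy (Equiv.addRight (γ ^ j * (1 - γ))) h ≤
      (6 * j ^ 2 + 8) * (dirichletEnergy (Equiv.mulLeft₀ γ hγ) h +
        dirichletEnergy (Equiv.mulLeft₀ γ hγ) (h ∘ Equiv.subLeft 1)) := by
  have htriple (σ τ : Equiv.Perm K) : dirichletEnergy (σ * τ * σ⁻¹) h ≤
      6 * dirichletEnergy σ h + 4 * dirichletEnergy τ h := by
    linarith [dirichletEnergy_mul_le (σ * τ) σ⁻¹ h, dirichletEnergy_mul_le σ τ h,
      dirichletEnergy_inv σ h]
  rw [addRight_pow_mul_eq hγ]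
  have hpow := dirichletEnergy_pow_le (Equiv.mulLeft₀ γ hγ) h j
  have hbase := dirichletEnergy_addRight_one_sub_le hγ h
  have hnonneg := mul_nonneg (sq_nonneg (j : ℝ))
    (dirichletEnergy_nonneg (Equiv.mulLeft₀ γ hγ) (h ∘ Equiv.subLeft 1))
  linarith [htriple (Equiv.mulLeft₀ γ hγ ^ j) (Equiv.addRight (1 - γ))]

lemma dirichletEnergy_mulLeft₀_eq_of_inv {g k : K → ℝ}
    (hk : ∀ y ≠ 0, k y = g y⁻¹) :
    dirichletEnergy (Equiv.mulLeft₀ γ hγ) k = dirichletEnergy (Equiv.mulLeft₀ γ hγ) g := by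
  refine Fintype.sum_equiv ((Equiv.mulLeft₀ γ hγ).trans (Equiv.inv K)) _ _ fun y => ?_
  simp only [Equiv.trans_apply, Equiv.mulLeft₀_apply, Equiv.inv_apply]
  rcases eq_or_ne y 0 with rfl | hy
  · simp
  · rw [hk y hy, hk (γ * y) (mul_ne_zero hγ hy), mul_inv, mul_inv_cancel_left₀ hγ]
    ring

end TranslationEnergy

section InvertedCoordinate

variable {K : Type*} [Field K] [DecidableEq K]

/-- The map `f_*` on a field. It extends to `0` by `fStar 0 = 0`, which makes it a permutation of
the whole field. -/
def fStar (x : K) : K := if x = 1 then 1 else x / (x - 1)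

lemma fStar_zero : fStar (0 : K) = 0 := by simp [fStar]

lemma fStar_involutive : Function.Involutive (fStar : K → K) := fun x => by
  rcases eq_or_ne x 1 with rfl | hx
  · simp [fStar]
  · have hx' : x - 1 ≠ 0 := sub_ne_zero.2 hx
    have hsub : x / (x - 1) - 1 = 1 / (x - 1) := by field_simp; ring
    have hne : x / (x - 1) ≠ 1 := sub_ne_zero.1 (hsub ▸ one_div_ne_zero hx')
    rw [fStar, fStar, if_neg hx, if_neg hne, hsub]
    field_simp

/-- The permutation `fStar` of a field. -/
def fStarPerm (K : Type*) [Field K] [DecidableEq K] : Equiv.Perm K := fStar_involutive.toPerm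

lemma fStarPerm_apply (x : K) : fStarPerm K x = fStar x := rfl

lemma fStar_eq_zero_iff {x : K} : fStar x = 0 ↔ x = 0 := by
  rw [← fStar_involutive.injective.eq_iff (a := x), fStar_zero]

/-- The coordinate `y = x⁻¹` on `Kˣ`, in which `fStar` becomes the reflection `y ↦ 1 - y`. At
`y = 0` the value `1` is the one which preserves this relation at `y = 1`. -/
def invCoord (y : K) : K := if y = 0 then 1 else y⁻¹

lemma invCoord_of_ne_zero {y : K} (hy : y ≠ 0) : invCoord y = y⁻¹ := if_neg hy

lemma invCoord_one_sub {y : K} (hy : y ≠ 0) : invCoord (1 - y) = fStar y⁻¹ := by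
  rcases eq_or_ne y 1 with rfl | hy1
  · simp [invCoord, fStar]
  · have hsub : 1 - y ≠ 0 := sub_ne_zero.2 hy1.symm
    rw [invCoord, if_neg hsub, fStar, if_neg (by simpa using hy1)]
    field_simp

variable [Fintype K]

lemma dirichletEnergy_comp_invCoord {γ : K} (hγ : γ ≠ 0) (g : K → ℝ) :
    dirichletEnergy (Equiv.mulLeft₀ γ hγ) (g ∘ invCoord) =
      dirichletEnergy (Equiv.mulLeft₀ γ hγ) g :=
  dirichletEnergy_mulLeft₀_eq_of_inv hγ fun y hy => by
    rw [Function.comp_apply, invCoord_of_ne_zero hy]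

lemma dirichletEnergy_comp_invCoord_comp_subLeft {γ : K} (hγ : γ ≠ 0) (g : K → ℝ) :
    dirichletEnergy (Equiv.mulLeft₀ γ hγ) ((g ∘ invCoord) ∘ Equiv.subLeft 1) =
      dirichletEnergy (Equiv.mulLeft₀ γ hγ) (g ∘ fStar) :=
  dirichletEnergy_mulLeft₀_eq_of_inv hγ fun y hy => by
    simp only [Function.comp_apply, Equiv.subLeft_apply, invCoord_one_sub hy]

lemma sum_sq_le_sum_comp_invCoord_sub_sq {g : K → ℝ} (hg0 : g 0 = 0) (hg : ∑ x, g x = 0)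
    (m : ℝ) : ∑ x, g x ^ 2 ≤ ∑ y, (g (invCoord y) - m) ^ 2 := by
  calc ∑ x, g x ^ 2 = ∑ x, (g x ^ 2 - 2 * m * g x) := by
        rw [Finset.sum_sub_distrib, ← Finset.mul_sum, hg, mul_zero, sub_zero]
    _ = ∑ y, (g y⁻¹ ^ 2 - 2 * m * g y⁻¹) :=
        (Equiv.sum_comp (Equiv.inv K) fun x => g x ^ 2 - 2 * m * g x).symm
    _ ≤ ∑ y, (g (invCoord y) - m) ^ 2 := Finset.sum_le_sum fun y _ => by
        rcases eq_or_ne y 0 with rfl | hy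
        · simpa [hg0] using sq_nonneg (g (invCoord 0) - m)
        · rw [invCoord_of_ne_zero hy]
          linarith [sq_nonneg m, sub_sq (g y⁻¹) m]

end InvertedCoordinate

section LazyAverage

variable {α : Type*}

/-- The averaging operator `(1 + σ + σ⁻¹) / 3` of a permutation `σ`. -/
noncomputable def lazyAverage (σ : Equiv.Perm α) (g : α → ℝ) (x : α) : ℝ :=
  (g x + g (σ x) + g (σ⁻¹ x)) / 3

lemma lazyAverage_sub (σ : Equiv.Perm α) (g k : α → ℝ) :
    lazyAverage σ (g - k) = lazyAverage σ g - lazyAverage σ k := by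
  funext x
  simp only [lazyAverage, Pi.sub_apply]
  ring

lemma lazyAverage_eq_self_of_comp_eq {σ : Equiv.Perm α} {g : α → ℝ} (h : g ∘ σ = g) :
    lazyAverage σ g = g := by
  funext x
  have hinv : g (σ⁻¹ x) = g x := by
    rw [← congrFun h (σ⁻¹ x), Function.comp_apply, Equiv.Perm.inv_def, Equiv.apply_symm_apply]
  rw [lazyAverage, hinv, ← Function.comp_apply (f := g), h]
  ring

variable [Fintype α] (σ τ : Equiv.Perm α) (g : α → ℝ)

lemma sum_lazyAverage_sq_le :
    ∑ x, lazyAverage σ g x ^ 2 ≤ ∑ x, g x ^ 2 - 2 / 9 * dirichletEnergy σ g := by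
  have hpoint (x : α) : lazyAverage σ g x ^ 2 ≤ 1 / 3 * (g x ^ 2 + g (σ x) ^ 2 + g (σ⁻¹ x) ^ 2) -
      1 / 9 * ((g (σ x) - g x) ^ 2 + (g (σ⁻¹ x) - g x) ^ 2) := by
    rw [lazyAverage]
    linarith [sq_nonneg (g (σ x) - g (σ⁻¹ x))]
  calc ∑ x, lazyAverage σ g x ^ 2
      ≤ 1 / 3 * (∑ x, g x ^ 2 + ∑ x, g (σ x) ^ 2 + ∑ x, g (σ⁻¹ x) ^ 2) -
          1 / 9 * (dirichletEnergy σ g + dirichletEnergy σ⁻¹ g) := by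
        simp only [dirichletEnergy, ← Finset.sum_add_distrib, Finset.mul_sum,
          ← Finset.sum_sub_distrib]
        exact Finset.sum_le_sum fun x _ => hpoint x
    _ = ∑ x, g x ^ 2 - 2 / 9 * dirichletEnergy σ g := by
        rw [Equiv.sum_comp σ fun x => g x ^ 2, Equiv.sum_comp σ⁻¹ fun x => g x ^ 2,
          dirichletEnergy_inv]
        ring

lemma sum_lazyAverage_sub_sq_le :
    ∑ x, (lazyAverage σ g x - g x) ^ 2 ≤ 4 / 9 * dirichletEnergy σ g := by
  have hpoint (x : α) : (lazyAverage σ g x - g x) ^ 2 ≤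
      2 / 9 * ((g (σ x) - g x) ^ 2 + (g (σ⁻¹ x) - g x) ^ 2) := by
    rw [lazyAverage]
    linarith [sq_nonneg (g (σ x) - g (σ⁻¹ x))]
  calc ∑ x, (lazyAverage σ g x - g x) ^ 2
      ≤ 2 / 9 * (dirichletEnergy σ g + dirichletEnergy σ⁻¹ g) := by
        rw [dirichletEnergy, dirichletEnergy, ← Finset.sum_add_distrib, Finset.mul_sum]
        exact Finset.sum_le_sum fun x _ => hpoint x
    _ = 4 / 9 * dirichletEnergy σ g := by
        rw [dirichletEnergy_inv]
        ring

lemma dirichletEnergy_le_of_sub (g k : α → ℝ) :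
    dirichletEnergy σ g ≤ 3 * dirichletEnergy σ k + 6 * ∑ x, (k x - g x) ^ 2 := by
  have hpoint (a b c d : ℝ) :
      (a - b) ^ 2 ≤ 3 * (c - d) ^ 2 + 3 * ((c - a) ^ 2 + (d - b) ^ 2) := by
    nlinarith [sq_nonneg ((c - d) + (c - a)), sq_nonneg ((c - d) - (d - b)),
      sq_nonneg ((c - a) + (d - b))]
  calc dirichletEnergy σ g ≤ ∑ x, (3 * (k (σ x) - k x) ^ 2 +
        3 * ((k (σ x) - g (σ x)) ^ 2 + (k x - g x) ^ 2)) :=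
        Finset.sum_le_sum fun x _ => hpoint _ _ _ _
    _ = 3 * dirichletEnergy σ k + 6 * ∑ x, (k x - g x) ^ 2 := by
        rw [Finset.sum_add_distrib, ← Finset.mul_sum, ← Finset.mul_sum, Finset.sum_add_distrib,
          Equiv.sum_comp σ fun x => (k x - g x) ^ 2, dirichletEnergy]
        ring

/- One averaging step loses `dirichletEnergy σ g`; if that is small then the step hardly moves `g`,
and the second step loses nearly `dirichletEnergy σ (g ∘ τ)`. -/
lemma sum_lazyAverage_comp_lazyAverage_sq_le {κ : ℝ}
    (hgap : κ * ∑ x, g x ^ 2 ≤ dirichletEnergy σ g + dirichletEnergy σ (g ∘ τ)) :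
    ∑ x, lazyAverage σ (lazyAverage σ g ∘ τ) x ^ 2 ≤ (1 - κ / 18) * ∑ x, g x ^ 2 := by
  have hfirst := sum_lazyAverage_sq_le σ g
  have hsecond : ∑ x, lazyAverage σ (lazyAverage σ g ∘ τ) x ^ 2 ≤
      ∑ x, lazyAverage σ g x ^ 2 - 2 / 9 * dirichletEnergy σ (lazyAverage σ g ∘ τ) :=
    (sum_lazyAverage_sq_le σ _).trans_eq
      (by rw [← Equiv.sum_comp τ fun x => lazyAverage σ g x ^ 2]; rfl)
  have hmove : dirichletEnergy σ (g ∘ τ) ≤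
      3 * dirichletEnergy σ (lazyAverage σ g ∘ τ) + 6 * (4 / 9 * dirichletEnergy σ g) := by
    refine (dirichletEnergy_le_of_sub σ _ (lazyAverage σ g ∘ τ)).trans ?_
    gcongr
    exact (Equiv.sum_comp τ fun x => (lazyAverage σ g x - g x) ^ 2).trans_le
      (sum_lazyAverage_sub_sq_le σ g)
  linarith [dirichletEnergy_nonneg σ g, dirichletEnergy_nonneg σ (lazyAverage σ g ∘ τ)]

end LazyAverage

section Poincare

section Translations

variable {N : ℕ} [NeZero N]

lemma two_div_le_norm_stdAddChar_sub_one {z : ZMod N} {d : ℕ} (hd : 0 < d)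
    (hz : N / (2 * d) < z.valMinAbs.natAbs) : 2 / (d : ℝ) ≤ ‖ZMod.stdAddChar z - 1‖ := by
  have hN : (0 : ℝ) < N := Nat.cast_pos.2 (NeZero.pos N)
  have hlarge : (N : ℝ) ≤ |(z.valMinAbs : ℝ)| * (2 * d) := by
    have := ((Nat.div_lt_iff_lt_mul (by positivity)).1 hz).le
    rw [← Int.cast_abs, ← Nat.cast_natAbs]
    exact_mod_cast this
  refine le_trans ?_ (four_mul_abs_valMinAbs_div_le_norm_stdAddChar_sub_one z)
  rw [div_le_div_iff₀ (Nat.cast_pos.2 hd) hN]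
  linarith

lemma sq_mul_sum_sq_le_sum_dirichletEnergy_addRight {ι : Type*} {s : Finset ι} {t : ι → ZMod N}
    {δ : ℝ} (hδ : 0 ≤ δ) (ht : ∀ k ≠ 0, ∃ i ∈ s, δ ≤ ‖ZMod.stdAddChar (k * t i) - 1‖)
    {g : ZMod N → ℝ} (hg : ∑ y, g y = 0) :
    δ ^ 2 * ∑ y, g y ^ 2 ≤ ∑ i ∈ s, dirichletEnergy (Equiv.addRight (t i)) g := by
  have h := sq_mul_sum_norm_sq_le_sum_norm_sq_translate_sub hδ ht
    (Φ := fun y => (g y : ℂ)) (by exact_mod_cast hg)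
  simpa only [dirichletEnergy, Equiv.coe_addRight, ← Complex.ofReal_sub, Complex.norm_real,
    Real.norm_eq_abs, sq_abs] using h

end Translations

variable {p : ℕ} [Fact p.Prime] {γ : ZMod p} {d : ℕ} {g : ZMod p → ℝ}

lemma sq_mul_sum_sq_le_mul_dirichletEnergy_of_lt_natAbs (hγ : γ ≠ 0) (hγ1 : γ ≠ 1) (hd : 0 < d)
    {N : ℕ} (hlarge : ∀ ξ : ZMod p, ξ ≠ 0 → ∃ j ≤ N, p / (2 * d) < (ξ * γ ^ j).valMinAbs.natAbs)
    (hg0 : g 0 = 0) (hg : ∑ x, g x = 0) :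
    (2 / d : ℝ) ^ 2 * ∑ x, g x ^ 2 ≤ (N + 1) * (6 * N ^ 2 + 8) *
      (dirichletEnergy (Equiv.mulLeft₀ γ hγ) g +
        dirichletEnergy (Equiv.mulLeft₀ γ hγ) (g ∘ fStar)) := by
  set E := dirichletEnergy (Equiv.mulLeft₀ γ hγ) g +
    dirichletEnergy (Equiv.mulLeft₀ γ hγ) (g ∘ fStar) with hE
  have hE0 : 0 ≤ E := add_nonneg (dirichletEnergy_nonneg _ _) (dirichletEnergy_nonneg _ _)
  set m : ℝ := (∑ y, g (invCoord y)) / p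
  set h : ZMod p → ℝ := fun y => g (invCoord y) - m with hh
  have hmean : ∑ y, h y = 0 := by
    have hp : (p : ℝ) ≠ 0 := Nat.cast_ne_zero.2 (Fact.out : p.Prime).ne_zero
    rw [Finset.sum_sub_distrib, Finset.sum_const, Finset.card_univ, ZMod.card, nsmul_eq_mul,
      mul_div_cancel₀ _ hp, sub_self]
  have hfreq : ∀ k : ZMod p, k ≠ 0 → ∃ j ∈ Finset.range (N + 1),
      2 / (d : ℝ) ≤ ‖ZMod.stdAddChar (k * (γ ^ j * (1 - γ))) - 1‖ := fun k hk => by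
    obtain ⟨j, hj, hlt⟩ := hlarge (k * (1 - γ)) (mul_ne_zero hk (sub_ne_zero.2 hγ1.symm))
    refine ⟨j, Finset.mem_range_succ_iff.2 hj, two_div_le_norm_stdAddChar_sub_one hd ?_⟩
    rwa [mul_left_comm, mul_comm (γ ^ j)]
  have henergy : dirichletEnergy (Equiv.mulLeft₀ γ hγ) h +
      dirichletEnergy (Equiv.mulLeft₀ γ hγ) (h ∘ Equiv.subLeft 1) = E := by
    rw [hE, ← dirichletEnergy_comp_invCoord hγ g,
      ← dirichletEnergy_comp_invCoord_comp_subLeft hγ g]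
    simp only [dirichletEnergy, hh, Function.comp_apply, sub_sub_sub_cancel_right]
  calc (2 / d : ℝ) ^ 2 * ∑ x, g x ^ 2 ≤ (2 / d : ℝ) ^ 2 * ∑ y, h y ^ 2 :=
        mul_le_mul_of_nonneg_left (sum_sq_le_sum_comp_invCoord_sub_sq hg0 hg m) (sq_nonneg _)
    _ ≤ ∑ j ∈ Finset.range (N + 1), dirichletEnergy (Equiv.addRight (γ ^ j * (1 - γ))) h :=
        sq_mul_sum_sq_le_sum_dirichletEnergy_addRight (by positivity) hfreq hmean
    _ ≤ ∑ _j ∈ Finset.range (N + 1), (6 * N ^ 2 + 8) * E := Finset.sum_le_sum fun j hj => by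
        have hjN : j ≤ N := Finset.mem_range_succ_iff.1 hj
        refine (dirichletEnergy_addRight_pow_mul_one_sub_le hγ h j).trans ?_
        rw [henergy]
        gcongr
    _ = (N + 1) * (6 * N ^ 2 + 8) * E := by
        rw [Finset.sum_const, Finset.card_range, nsmul_eq_mul, Nat.cast_succ, mul_assoc]

lemma sum_sq_le_mul_dirichletEnergy_add_dirichletEnergy_comp_fStar (hd : 20 ≤ d) (hp : p < 2 ^ d)
    (horder : d ^ 3 < orderOf γ) (hγ : γ ≠ 0) (hg0 : g 0 = 0) (hg : ∑ x, g x = 0) :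
    ∑ x, g x ^ 2 ≤ 6 * d ^ 17 * (dirichletEnergy (Equiv.mulLeft₀ γ hγ) g +
      dirichletEnergy (Equiv.mulLeft₀ γ hγ) (g ∘ fStar)) := by
  set E := dirichletEnergy (Equiv.mulLeft₀ γ hγ) g +
    dirichletEnergy (Equiv.mulLeft₀ γ hγ) (g ∘ fStar)
  have hE0 : 0 ≤ E := add_nonneg (dirichletEnergy_nonneg _ _) (dirichletEnergy_nonneg _ _)
  have hd1 : (1 : ℝ) ≤ d := by exact_mod_cast (by lia : 1 ≤ d)
  have hd20 : (20 : ℝ) ≤ d := by exact_mod_cast hd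
  have hγ1 : γ ≠ 1 := by
    rintro rfl
    have := Nat.one_le_pow 3 d (by lia)
    rw [orderOf_one] at horder
    lia
  have hgap := sq_mul_sum_sq_le_mul_dirichletEnergy_of_lt_natAbs hγ hγ1 (by lia : 0 < d)
    (fun ξ hξ => exists_lt_natAbs_valMinAbs_mul_pow_of_card_primes hp horder
      (le_card_filter_prime_Icc_two_mul_pow_three hd) hξ) hg0 hg
  have hN : ((d * (d ^ 3 * d) : ℕ) : ℝ) = d ^ 5 := by push_cast; ring
  rw [hN] at hgap
  have hpoly : ((d : ℝ) ^ 5 + 1) * (6 * (d ^ 5) ^ 2 + 8) ≤ 24 * (d ^ 5) ^ 3 := by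
    have : (2 : ℝ) ≤ d ^ 5 := (by linarith : (2 : ℝ) ≤ d).trans (le_self_pow₀ hd1 (by norm_num))
    nlinarith [sq_nonneg ((d : ℝ) ^ 5 - 2), pow_le_pow_left₀ (by norm_num) this 3]
  calc ∑ x, g x ^ 2 = d ^ 2 / 4 * ((2 / d : ℝ) ^ 2 * ∑ x, g x ^ 2) := by field_simp; norm_num
    _ ≤ d ^ 2 / 4 * (24 * (d ^ 5) ^ 3 * E) :=
        mul_le_mul_of_nonneg_left (hgap.trans (by gcongr)) (by positivity)
    _ = 6 * d ^ 17 * E := by ring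

end Poincare

section Decay

variable {α : Type*} [Fintype α] {σ τ : Equiv.Perm α} {u : ℕ → α → ℝ}

lemma sum_sq_succ_le_of_eq_lazyAverage (hu : ∀ n, u (n + 1) = lazyAverage σ (u n ∘ τ)) (n : ℕ) :
    ∑ x, u (n + 1) x ^ 2 ≤ ∑ x, u n x ^ 2 := by
  have h := sum_lazyAverage_sq_le σ (u n ∘ τ)
  simp only [← hu, Function.comp_apply] at h
  rw [Equiv.sum_comp τ fun x => u n x ^ 2] at h
  linarith [dirichletEnergy_nonneg σ (u n ∘ τ)]

lemma sum_sq_le_exp_mul_of_eq_lazyAverage (hu : ∀ n, u (n + 1) = lazyAverage σ (u n ∘ τ)) {ε : ℝ}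
    (hgap : ∀ n, 18 * ε * ∑ x, u n x ^ 2 ≤
      dirichletEnergy σ (u n ∘ τ) + dirichletEnergy σ ((u n ∘ τ) ∘ τ)) (n : ℕ) :
    ∑ x, u n x ^ 2 ≤ Real.exp (-ε * (n / 2 : ℕ)) * ∑ x, u 0 x ^ 2 := by
  have hstep (n : ℕ) : ∑ x, u (n + 2) x ^ 2 ≤ Real.exp (-ε) * ∑ x, u n x ^ 2 := by
    have hcomp : ∑ x, (u n ∘ τ) x ^ 2 = ∑ x, u n x ^ 2 := Equiv.sum_comp τ fun x => u n x ^ 2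
    have h := sum_lazyAverage_comp_lazyAverage_sq_le σ τ (u n ∘ τ) (hcomp.symm ▸ hgap n)
    rw [← hu, ← hu, hcomp, mul_div_cancel_left₀ _ (by norm_num)] at h
    refine h.trans (mul_le_mul_of_nonneg_right ?_ (Finset.sum_nonneg fun _ _ => sq_nonneg _))
    linarith [Real.add_one_le_exp (-ε)]
  have heven (k : ℕ) : ∑ x, u (2 * k) x ^ 2 ≤ Real.exp (-ε * k) * ∑ x, u 0 x ^ 2 := by
    induction k with
    | zero => simp
    | succ k ih =>
      refine (hstep (2 * k)).trans ((mul_le_mul_of_nonneg_left ih (Real.exp_nonneg _)).trans_eq ?_)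
      rw [← mul_assoc, ← Real.exp_add]
      push_cast
      ring_nf
  obtain ⟨k, rfl | rfl⟩ := n.even_or_odd'
  · rw [Nat.mul_div_cancel_left k two_pos]
    exact heven k
  · rw [show (2 * k + 1) / 2 = k by lia]
    exact (sum_sq_succ_le_of_eq_lazyAverage hu _).trans (heven k)

end Decay

section Walk

lemma one_lt_cast_card {α : Type*} [Fintype α] [Nontrivial α] : 1 < (Fintype.card α : ℝ) :=
  Nat.one_lt_cast.2 Fintype.one_lt_card

lemma sum_toReal_pmf {α : Type*} [Fintype α] (μ : PMF α) : ∑ x, (μ x).toReal = 1 := by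
  rw [← ENNReal.toReal_sum fun x _ => μ.apply_ne_top x, ← tsum_fintype (L := .unconditional α),
    μ.tsum_coe, ENNReal.toReal_one]

lemma toReal_pmf_le_one {α : Type*} (μ : PMF α) (x : α) : (μ x).toReal ≤ 1 :=
  ENNReal.toReal_le_of_le_ofReal zero_le_one (by simpa using μ.coe_le_one x)

lemma walkDist_succ {S : Type*} (step : S → PMF S) (x₀ : S) (n : ℕ) :
    walkDist step x₀ (n + 1) = (walkDist step x₀ n).bind step :=
  Function.iterate_succ_apply' _ _ _

lemma toReal_bind_map_uniformOfFintype {ι α : Type*} [Fintype ι] [Nonempty ι] (μ : PMF α)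
    (e : ι → Equiv.Perm α) (y : α) :
    ((μ.bind fun x => (PMF.uniformOfFintype ι).map fun i => e i x) y).toReal =
      (∑ i, (μ ((e i)⁻¹ y)).toReal) / Fintype.card ι := by
  have hmap (i : ι) : (μ.bind fun x => PMF.pure (e i x)) y = μ ((e i)⁻¹ y) := by
    rw [PMF.bind_apply, tsum_eq_single ((e i)⁻¹ y)]
    · simp
    · intro x hx
      rw [PMF.pure_apply_of_ne _ _ fun h => hx (by simp [h]), mul_zero]
  have hswap : (μ.bind fun x => (PMF.uniformOfFintype ι).map fun i => e i x) =
      (PMF.uniformOfFintype ι).bind fun i => μ.bind fun x => PMF.pure (e i x) :=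
    PMF.bind_comm _ _ _
  rw [hswap, PMF.bind_apply, tsum_fintype, ENNReal.toReal_sum fun i _ =>
    ENNReal.mul_ne_top (PMF.apply_ne_top _ _) (PMF.apply_ne_top _ _), Finset.sum_div]
  refine Finset.sum_congr rfl fun i _ => ?_
  rw [hmap, ENNReal.toReal_mul, PMF.uniformOfFintype_apply, ENNReal.toReal_inv,
    ENNReal.toReal_natCast, inv_mul_eq_div]

variable {K : Type*} [Field K] [DecidableEq K]

/-- The transition map of the chain, which moves from `x` to `fStar x * ε` with `ε` uniform in
`{1, γ⁻¹, γ}`, on the whole field rather than on its nonzero elements. -/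
noncomputable def starStep (γ x : K) : PMF K :=
  (PMF.uniformOfFintype (Fin 3)).map fun i => fStar x * ![1, γ⁻¹, γ] i

lemma toReal_walkDist_starStep_succ {γ : K} (hγ : γ ≠ 0) (x₀ : K) (n : ℕ) :
    (fun x => (walkDist (starStep γ) x₀ (n + 1) x).toReal) = lazyAverage (Equiv.mulLeft₀ γ hγ)
      ((fun x => (walkDist (starStep γ) x₀ n x).toReal) ∘ fStarPerm K) := by
  have hε : ∀ i, (![1, γ⁻¹, γ] : Fin 3 → K) i ≠ 0 := by
    simp [Fin.forall_fin_succ, hγ]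
  funext y
  have h := toReal_bind_map_uniformOfFintype (walkDist (starStep γ) x₀ n)
    (fun i => Equiv.mulRight₀ _ (hε i) * fStarPerm K) y
  rw [walkDist_succ]
  refine h.trans ?_
  simp [Fin.sum_univ_three, lazyAverage, fStarPerm, Equiv.Perm.inv_def, mul_comm y]

lemma toReal_walkDist_starStep_zero {γ : K} (hγ : γ ≠ 0) {x₀ : K} (hx₀ : x₀ ≠ 0) (n : ℕ) :
    (walkDist (starStep γ) x₀ n 0).toReal = 0 := by
  induction n with
  | zero => simp [walkDist, hx₀.symm]
  | succ n ih =>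
    rw [congrFun (toReal_walkDist_starStep_succ hγ x₀ n) 0]
    simp [lazyAverage, Equiv.Perm.inv_def, fStarPerm_apply, fStar_zero, ih]

variable [Fintype K]

/-- The density of the uniform distribution on the nonzero elements of a finite field. -/
noncomputable def uniformNonzero (x : K) : ℝ := if x = 0 then 0 else 1 / ((Fintype.card K : ℝ) - 1)

lemma uniformNonzero_comp_of_eq_zero_iff {σ : K → K} (hσ : ∀ x, σ x = 0 ↔ x = 0) :
    uniformNonzero ∘ σ = uniformNonzero := by
  funext x
  simp only [uniformNonzero, Function.comp_apply, hσ]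

lemma sum_uniformNonzero : ∑ x : K, uniformNonzero x = 1 := by
  have hcard : (Fintype.card K : ℝ) - 1 ≠ 0 := (sub_pos.2 one_lt_cast_card).ne'
  have hsplit (x : K) : uniformNonzero x =
      1 / ((Fintype.card K : ℝ) - 1) - if x = 0 then 1 / ((Fintype.card K : ℝ) - 1) else 0 := by
    rw [uniformNonzero]
    split_ifs <;> simp
  simp only [hsplit, Finset.sum_sub_distrib, Finset.sum_const, Finset.card_univ, nsmul_eq_mul,
    Finset.sum_ite_eq', Finset.mem_univ, if_true]
  field_simp

/-- The deviation of the law of the chain after `n` steps from the uniform distribution on the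
nonzero elements. -/
noncomputable def walkDeviation (γ x₀ : K) (n : ℕ) : K → ℝ :=
  (fun x => (walkDist (starStep γ) x₀ n x).toReal) - uniformNonzero

lemma walkDeviation_succ {γ : K} (hγ : γ ≠ 0) (x₀ : K) (n : ℕ) :
    walkDeviation γ x₀ (n + 1) =
      lazyAverage (Equiv.mulLeft₀ γ hγ) (walkDeviation γ x₀ n ∘ fStarPerm K) := by
  have hfStar : (uniformNonzero : K → ℝ) ∘ fStarPerm K = uniformNonzero :=
    uniformNonzero_comp_of_eq_zero_iff fun _ => fStar_eq_zero_iff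
  have hmul : (uniformNonzero : K → ℝ) ∘ Equiv.mulLeft₀ γ hγ = uniformNonzero :=
    uniformNonzero_comp_of_eq_zero_iff fun _ => by simp [hγ]
  rw [walkDeviation, walkDeviation, Pi.sub_comp, hfStar, lazyAverage_sub,
    lazyAverage_eq_self_of_comp_eq hmul, toReal_walkDist_starStep_succ hγ]

lemma walkDeviation_zero {γ : K} (hγ : γ ≠ 0) {x₀ : K} (hx₀ : x₀ ≠ 0) (n : ℕ) :
    walkDeviation γ x₀ n 0 = 0 := by
  simp [walkDeviation, uniformNonzero, toReal_walkDist_starStep_zero hγ hx₀]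

lemma sum_walkDeviation (γ x₀ : K) (n : ℕ) : ∑ x, walkDeviation γ x₀ n x = 0 := by
  simp only [walkDeviation, Pi.sub_apply, Finset.sum_sub_distrib, sum_toReal_pmf,
    sum_uniformNonzero, sub_self]

lemma sum_walkDeviation_sq_le_one {γ : K} (hγ : γ ≠ 0) {x₀ : K} (hx₀ : x₀ ≠ 0) (n : ℕ) :
    ∑ x, walkDeviation γ x₀ n x ^ 2 ≤ 1 := by
  set μ := walkDist (starStep γ) x₀ n
  set a : ℝ := 1 / ((Fintype.card K : ℝ) - 1)
  have ha : 0 ≤ a := (one_div_pos.2 (sub_pos.2 one_lt_cast_card)).le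
  have hpoint (x : K) : walkDeviation γ x₀ n x ^ 2 ≤
      (μ x).toReal - 2 * a * (μ x).toReal + a * uniformNonzero x := by
    have hle : (μ x).toReal ^ 2 ≤ (μ x).toReal :=
      pow_le_of_le_one ENNReal.toReal_nonneg (toReal_pmf_le_one μ x) two_ne_zero
    rcases eq_or_ne x 0 with rfl | hx
    · rw [walkDeviation_zero hγ hx₀]
      simp [μ, toReal_walkDist_starStep_zero hγ hx₀, uniformNonzero]
    · have hu : (uniformNonzero x : ℝ) = a := if_neg hx
      rw [walkDeviation, Pi.sub_apply, hu, sub_sq]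
      linarith
  calc ∑ x, walkDeviation γ x₀ n x ^ 2
      ≤ ∑ x, ((μ x).toReal - 2 * a * (μ x).toReal + a * uniformNonzero x) :=
        Finset.sum_le_sum fun x _ => hpoint x
    _ = 1 - a := by
        rw [Finset.sum_add_distrib, Finset.sum_sub_distrib, ← Finset.mul_sum, ← Finset.mul_sum,
          sum_toReal_pmf, sum_uniformNonzero]
        ring
    _ ≤ 1 := by linarith

lemma sum_uniformNonzero_eq {A : Finset K} (hA : ∀ x ∈ A, x ≠ 0) :
    ∑ x ∈ A, uniformNonzero x = A.card / ((Fintype.card K : ℝ) - 1) := by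
  have hval : ∀ x ∈ A, uniformNonzero x = 1 / ((Fintype.card K : ℝ) - 1) :=
    fun x hx => if_neg (hA x hx)
  rw [Finset.sum_congr rfl hval, Finset.sum_const, nsmul_eq_mul, mul_one_div]

lemma sum_walkDist_sub_eq_sum_walkDeviation (γ x₀ : K) (n : ℕ) {A : Finset K}
    (hA : ∀ x ∈ A, x ≠ 0) :
    ∑ x ∈ A, (walkDist (starStep γ) x₀ n x).toReal - A.card / ((Fintype.card K : ℝ) - 1) =
      ∑ x ∈ A, walkDeviation γ x₀ n x := by
  rw [← sum_uniformNonzero_eq hA, ← Finset.sum_sub_distrib]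
  rfl

lemma abs_sum_walkDeviation_le_one (γ x₀ : K) (n : ℕ) (A : Finset K) :
    |∑ x ∈ A, walkDeviation γ x₀ n x| ≤ 1 := by
  have hnonneg (x : K) : 0 ≤ uniformNonzero x := by
    rw [uniformNonzero]
    have := sub_pos.2 (one_lt_cast_card (α := K))
    positivity
  have hsub : ∑ x ∈ A, walkDeviation γ x₀ n x =
      ∑ x ∈ A, (walkDist (starStep γ) x₀ n x).toReal - ∑ x ∈ A, uniformNonzero x :=
    Finset.sum_sub_distrib _ _
  have hμ := sum_toReal_pmf (walkDist (starStep γ) x₀ n)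
  rw [hsub]
  exact abs_sub_le_of_nonneg_of_le (Finset.sum_nonneg fun _ _ => ENNReal.toReal_nonneg)
    (hμ ▸ Finset.sum_le_univ_sum_of_nonneg fun _ => ENNReal.toReal_nonneg)
    (Finset.sum_nonneg fun x _ => hnonneg x)
    (sum_uniformNonzero (K := K) ▸ Finset.sum_le_univ_sum_of_nonneg hnonneg)

end Walk

section Parameters

lemma exists_dyadic_scale_of_log_pow_three_le {p : ℕ} (hp : 1 < p) {γ : ZMod p}
    (horder : 2 ^ 22 * Real.log p ^ 3 ≤ orderOf γ) :
    ∃ d : ℕ, 20 ≤ d ∧ p < 2 ^ d ∧ d ^ 3 < orderOf γ ∧ (d : ℝ) ≤ 2 * Real.log p := by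
  have hlog2 := Real.log_two_gt_d9
  have hlog : Real.log 2 ≤ Real.log p :=
    Real.log_le_log two_pos (by exact_mod_cast hp)
  have hfloor : (Nat.log 2 p : ℝ) * Real.log 2 ≤ Real.log p := by
    rw [← Real.log_pow]
    exact Real.log_le_log (by positivity)
      (by exact_mod_cast Nat.pow_log_le_self 2 (by lia))
  have hlarge : 2 ^ 19 ≤ p := by
    have hcube : (1 / 2 : ℝ) ^ 3 ≤ Real.log p ^ 3 :=
      pow_le_pow_left₀ (by norm_num) (by linarith) 3
    have : (2 ^ 19 : ℝ) ≤ orderOf γ := by linarith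
    exact (by exact_mod_cast this : 2 ^ 19 ≤ orderOf γ).trans (ZMod.orderOf_lt hp γ).le
  have hd : ((Nat.log 2 p + 1 : ℕ) : ℝ) ≤ 2 * Real.log p := by
    have : (19 : ℝ) ≤ Nat.log 2 p := by exact_mod_cast Nat.le_log_of_pow_le one_lt_two hlarge
    push_cast
    nlinarith
  refine ⟨Nat.log 2 p + 1, Nat.succ_le_succ (Nat.le_log_of_pow_le one_lt_two hlarge),
    Nat.lt_pow_succ_log_self one_lt_two p, ?_, hd⟩
  have hcube : ((Nat.log 2 p + 1 : ℕ) : ℝ) ^ 3 < orderOf γ :=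
    calc ((Nat.log 2 p + 1 : ℕ) : ℝ) ^ 3 ≤ (2 * Real.log p) ^ 3 := by gcongr
      _ < 2 ^ 22 * Real.log p ^ 3 := by
        have : 0 < Real.log p ^ 3 := pow_pos (by linarith) 3
        linarith
      _ ≤ orderOf γ := horder
  exact_mod_cast hcube

lemma sub_mul_half_le_of_pow_le {l : ℝ} {d n : ℕ} (hd : 20 ≤ d) (hdl : d ≤ 2 * l)
    (hn : 2 ^ 26 * l ^ 18 ≤ n) :
    l - 1 / (108 * d ^ 17) * (n / 2 : ℕ) ≤ 2 * -(n / (2 ^ 27 * l ^ 18)) := by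
  have hd' : (20 : ℝ) ≤ d := by exact_mod_cast hd
  have hl : 10 ≤ l := by linarith
  have hn0 : (2 ^ 26 : ℝ) ≤ n := by
    nlinarith [one_le_pow₀ (n := 18) (by linarith : 1 ≤ l)]
  have hhalf : (n : ℝ) / 256 ≤ (n / 2 : ℕ) / 108 := by
    have : (n : ℝ) ≤ 2 * (n / 2 : ℕ) + 1 := by exact_mod_cast (by lia : n ≤ 2 * (n / 2) + 1)
    linarith
  set x := (n : ℝ) / (2 ^ 26 * l ^ 18)
  have hx : 1 ≤ x := (one_le_div (by positivity)).2 hn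
  calc l - 1 / (108 * d ^ 17) * (n / 2 : ℕ) = l - (n / 2 : ℕ) / 108 / d ^ 17 := by
        rw [div_mul_eq_mul_div, one_mul, div_div]
    _ ≤ l - n / 256 / (2 * l) ^ 17 := by gcongr
    _ = l - 2 * l * x := by simp only [x]; field_simp; ring
    _ ≤ -x := by nlinarith
    _ = 2 * -(n / (2 ^ 27 * l ^ 18)) := by simp only [x]; field_simp

lemma exists_const_forall_pow_le_exp_div_log (k : ℕ) (a : ℝ) :
    ∃ C : ℝ, 1 ≤ C ∧ ∀ l > 1, C < Real.log l → a * l ^ k ≤ Real.exp (l / Real.log l) := by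
  have hlogsq := (Real.isLittleO_pow_log_id_atTop (n := 2)).def
    (show (0 : ℝ) < 1 / (k + 1) by positivity)
  obtain ⟨L, hL⟩ := Filter.eventually_atTop.1 (hlogsq.and (Filter.eventually_ge_atTop a))
  refine ⟨max 1 (Real.log (max L 1)), le_max_left _ _, fun l hl hC => ?_⟩
  have hLl : L ≤ l := (le_max_left L 1).trans
    ((Real.log_lt_log_iff (by positivity) (by linarith)).1 ((le_max_right _ _).trans_lt hC)).le
  obtain ⟨hlog, ha⟩ := hL l hLl
  have hpos : 0 < Real.log l := Real.log_pos hl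
  rw [id, Real.norm_of_nonneg (sq_nonneg _), Real.norm_of_nonneg (by linarith),
    one_div_mul_eq_div, le_div_iff₀ (by positivity)] at hlog
  calc a * l ^ k ≤ l * l ^ k := by gcongr
    _ = Real.exp ((k + 1 : ℕ) * Real.log l) := by
        rw [← Real.log_pow, Real.exp_log (by positivity), pow_succ']
    _ ≤ Real.exp (l / Real.log l) := by
        rw [Real.exp_le_exp, le_div_iff₀ hpos]
        push_cast
        linarith

/- An order of at least `exp (C * log p / log (log p))` is less than `p`, which forces
`C < log (log p)`; this makes `p` as large as necessary. -/
lemma exists_const_of_exp_le_orderOf (k : ℕ) (a : ℝ) :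
    ∃ C : ℝ, 0 < C ∧ ∀ p : ℕ, 16 ≤ p → ∀ γ : ZMod p,
      Real.exp (C * Real.log p / Real.log (Real.log p)) ≤ orderOf γ →
      Real.exp (Real.log p / Real.log (Real.log p)) ≤ orderOf γ ∧
        a * Real.log p ^ k ≤ Real.exp (Real.log p / Real.log (Real.log p)) := by
  obtain ⟨C, hC1, hC⟩ := exists_const_forall_pow_le_exp_div_log k a
  refine ⟨C, by linarith, fun p hp γ horder => ?_⟩
  have hp0 : (0 : ℝ) < p := by exact_mod_cast (by lia : 0 < p)
  have hl : 1 < Real.log p := by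
    have : (16 : ℝ) ≤ p := by exact_mod_cast hp
    rw [Real.lt_log_iff_exp_lt hp0]
    linarith [Real.exp_one_lt_d9]
  have hll : 0 < Real.log (Real.log p) := Real.log_pos hl
  have hlt : C * Real.log p / Real.log (Real.log p) < Real.log p :=
    (Real.lt_log_iff_exp_lt hp0).2
      (horder.trans_lt (by exact_mod_cast ZMod.orderOf_lt (by lia) γ))
  refine ⟨(Real.exp_le_exp.2 ?_).trans horder, hC _ hl ?_⟩
  · gcongr
    exact le_mul_of_one_le_left (by linarith) hC1
  · rw [div_lt_iff₀ hll, mul_comm] at hlt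
    exact lt_of_mul_lt_mul_left hlt (by linarith)

end Parameters

section Mixing

variable {p : ℕ} [Fact p.Prime] {γ x₀ : ZMod p} {d : ℕ}

lemma sum_walkDeviation_sq_le_exp (hd : 20 ≤ d) (hp : p < 2 ^ d) (horder : d ^ 3 < orderOf γ)
    (hγ : γ ≠ 0) (hx₀ : x₀ ≠ 0) (n : ℕ) :
    ∑ x, walkDeviation γ x₀ n x ^ 2 ≤ Real.exp (-(1 / (108 * d ^ 17)) * (n / 2 : ℕ)) := by
  have hgap (n : ℕ) : 18 * (1 / (108 * (d : ℝ) ^ 17)) * ∑ x, walkDeviation γ x₀ n x ^ 2 ≤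
      dirichletEnergy (Equiv.mulLeft₀ γ hγ) (walkDeviation γ x₀ n ∘ fStarPerm (ZMod p)) +
        dirichletEnergy (Equiv.mulLeft₀ γ hγ)
          ((walkDeviation γ x₀ n ∘ fStarPerm (ZMod p)) ∘ fStarPerm (ZMod p)) := by
    have hzero : (walkDeviation γ x₀ n ∘ fStarPerm (ZMod p)) 0 = 0 := by
      rw [Function.comp_apply, fStarPerm_apply, fStar_zero, walkDeviation_zero hγ hx₀]
    have hsum : ∑ x, (walkDeviation γ x₀ n ∘ fStarPerm (ZMod p)) x = 0 :=
      (Equiv.sum_comp _ _).trans (sum_walkDeviation γ x₀ n)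
    have h := sum_sq_le_mul_dirichletEnergy_add_dirichletEnergy_comp_fStar hd hp horder hγ
      hzero hsum
    simp only [Function.comp_apply] at h
    rw [Equiv.sum_comp (fStarPerm (ZMod p)) fun x => walkDeviation γ x₀ n x ^ 2] at h
    have hconst : 18 * (1 / (108 * (d : ℝ) ^ 17)) = (6 * (d : ℝ) ^ 17)⁻¹ := by
      field_simp
      norm_num
    rw [hconst, inv_mul_le_iff₀ (by positivity)]
    exact h
  refine (sum_sq_le_exp_mul_of_eq_lazyAverage (walkDeviation_succ hγ x₀) hgap n).trans ?_
  exact mul_le_of_le_one_right (Real.exp_nonneg _) (sum_walkDeviation_sq_le_one hγ hx₀ 0)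

lemma sq_sum_walkDeviation_le_exp (hd : 20 ≤ d) (hp : p < 2 ^ d) (horder : d ^ 3 < orderOf γ)
    (hγ : γ ≠ 0) (hx₀ : x₀ ≠ 0) (n : ℕ) (A : Finset (ZMod p)) :
    (∑ x ∈ A, walkDeviation γ x₀ n x) ^ 2 ≤
      Real.exp (Real.log p - 1 / (108 * d ^ 17) * (n / 2 : ℕ)) := by
  have hcard : (A.card : ℝ) ≤ p := by
    exact_mod_cast A.card_le_univ.trans_eq (ZMod.card p)
  calc (∑ x ∈ A, walkDeviation γ x₀ n x) ^ 2
      ≤ A.card * ∑ x ∈ A, walkDeviation γ x₀ n x ^ 2 := sq_sum_le_card_mul_sum_sq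
    _ ≤ p * ∑ x, walkDeviation γ x₀ n x ^ 2 :=
        mul_le_mul hcard (Finset.sum_le_univ_sum_of_nonneg fun _ => sq_nonneg _)
          (Finset.sum_nonneg fun _ _ => sq_nonneg _) (Nat.cast_nonneg p)
    _ ≤ p * Real.exp (-(1 / (108 * d ^ 17)) * (n / 2 : ℕ)) :=
        mul_le_mul_of_nonneg_left (sum_walkDeviation_sq_le_exp hd hp horder hγ hx₀ n)
          (Nat.cast_nonneg p)
    _ = Real.exp (Real.log p - 1 / (108 * d ^ 17) * (n / 2 : ℕ)) := by
        rw [sub_eq_add_neg, ← neg_mul, Real.exp_add,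
          Real.exp_log (by exact_mod_cast (Fact.out : p.Prime).pos)]

theorem stmt1_general (horder : 2 ^ 22 * Real.log p ^ 3 ≤ orderOf γ) (hx₀ : x₀ ≠ 0) (n : ℕ)
    {A : Finset (ZMod p)} (hA : ∀ x ∈ A, x ≠ 0) :
    (1 / 2) * |∑ x ∈ A, (walkDist (starStep γ) x₀ n x).toReal - A.card / ((p : ℝ) - 1)| ≤
      Real.exp (-(n / (2 ^ 27 * Real.log p ^ 18))) := by
  have hprime : p.Prime := Fact.out
  have hlog : 0 < Real.log p := Real.log_pos (by exact_mod_cast hprime.one_lt)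
  have hγ : γ ≠ 0 := by
    rintro rfl
    have : 0 < 2 ^ 22 * Real.log p ^ 3 := by positivity
    simp at horder
    linarith
  have hdev := sum_walkDist_sub_eq_sum_walkDeviation γ x₀ n hA
  rw [ZMod.card] at hdev
  rw [hdev]
  rcases le_total (n : ℝ) (2 ^ 26 * Real.log p ^ 18) with hn | hn
  · have hratio : n / (2 ^ 27 * Real.log p ^ 18) ≤ 1 / 2 := by
      rw [div_le_iff₀ (by positivity)]
      linarith
    linarith [abs_sum_walkDeviation_le_one γ x₀ n A,
      Real.add_one_le_exp (-(n / (2 ^ 27 * Real.log p ^ 18)))]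
  · obtain ⟨d, hd, hp, hdγ, hdl⟩ := exists_dyadic_scale_of_log_pow_three_le hprime.one_lt horder
    have hsq := (sq_sum_walkDeviation_le_exp hd hp hdγ hγ hx₀ n A).trans
      (Real.exp_le_exp.2 (sub_mul_half_le_of_pow_le hd hdl hn))
    rw [two_mul, Real.exp_add, ← sq] at hsq
    linarith [abs_le_of_sq_le_sq hsq (Real.exp_nonneg _), abs_nonneg
      (∑ x ∈ A, walkDeviation γ x₀ n x)]

end Mixing

theorem stmt1 :
    ∃ C1 C2 C3 : ℝ, 0 < C1 ∧ 0 < C2 ∧ 0 < C3 ∧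
      ∀ (p : ℕ) [Fact p.Prime], 16 ≤ p →
        ∀ γ : ZMod p, γ ≠ 0 →
          Real.exp (C1 * Real.log p / Real.log (Real.log p)) ≤ orderOf γ →
          ∀ X0 : ZMod p, X0 ≠ 0 →
            ∀ step : ZMod p → PMF (ZMod p),
              step = (fun x => PMF.map
                (fun i : Fin 3 =>
                  if i = 0 then (if x = 1 then 1 else x / (x - 1)) * 1
                  else if i = 1 then (if x = 1 then 1 else x / (x - 1)) * γ⁻¹
                  else (if x = 1 then 1 else x / (x - 1)) * γ)
                (PMF.uniformOfFintype (Fin 3))) →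
              ∀ c : ℝ, 0 < c →
                ∀ n : ℕ, c * Real.exp (Real.log p / Real.log (Real.log p)) ≤ n →
                  ∀ A : Finset (ZMod p), (∀ x ∈ A, x ≠ 0) →
                    (1/2) * |(∑ x ∈ A, (walkDist step X0 n x).toReal)
                        - (A.card : ℝ) / ((p : ℝ) - 1)| ≤ C2 * Real.exp (-C3 * c) := by
  obtain ⟨C, hC, hlarge⟩ := exists_const_of_exp_le_orderOf 18 (2 ^ 27)
  refine ⟨C, 1, 1, hC, one_pos, one_pos,
    fun p _ hp γ _ horder X0 hX0 step hstep c hc n hn A hA => ?_⟩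
  obtain ⟨hexp, hlog⟩ := hlarge p hp γ horder
  have hl : 1 ≤ Real.log p := (Real.le_log_iff_exp_le (by positivity)).2
    (Real.exp_one_lt_three.le.trans (by exact_mod_cast (by lia : 3 ≤ p)))
  have hstar : step = starStep γ := by
    rw [hstep]
    funext x
    exact congrArg (PMF.map · _) (by funext i; fin_cases i <;> rfl)
  have hγ3 : 2 ^ 22 * Real.log p ^ 3 ≤ orderOf γ :=
    (mul_le_mul (by norm_num) (pow_le_pow_right₀ hl (by norm_num)) (by positivity)
      (by positivity)).trans (hlog.trans hexp)
  rw [hstar, one_mul, neg_one_mul]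
  refine (stmt1_general hγ3 hX0 n hA).trans (Real.exp_le_exp.2 (neg_le_neg ?_))
  exact (le_div_iff₀ (by positivity)).2 ((mul_le_mul_of_nonneg_left hlog hc.le).trans hn)
end

section
/- Let p be a prime, let A, B ⊆ F_p^* be finite nonempty sets, and let L = {x ↦ ax + b : a ∈ A, b ∈ B} ⊆ Aff(F_p), so |L| = |A||B|. Then for every even integer k ≥ 2 one has T_k(L) ≤ |A|^{2k−1}·T^+_k(B), where T^+_k(B) is the number of 2k-tuples (b_1, …, b_{2k}) ∈ B^{2k} with b_1 − b_2 + b_3 − ⋯ + b_{k−1} − b_k = b_{k+1} − b_{k+2} + ⋯ + b_{2k−1} − b_{2k}. -/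
open scoped BigOperators

/-- Alternating product `g 0 * (g 1)⁻¹ * g 2 * (g 3)⁻¹ * ⋯` of a tuple in a group. -/
def altp {G : Type*} [Group G] (m : ℕ) (g : Fin m → G) : G :=
  (((List.finRange m).map (fun i : Fin m => if (i : ℕ) % 2 = 0 then g i else (g i)⁻¹)).prod)

/-- `Tmul m L` is the number of `2m`-tuples `(l_1, …, l_{2m}) ∈ L^{2m}` with
`l_1 l_2⁻¹ ⋯ l_{m-1} l_m⁻¹ = l_{m+1} l_{m+2}⁻¹ ⋯ l_{2m-1} l_{2m}⁻¹` (for even `m`). -/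
noncomputable def Tmul {G : Type*} [Group G] (m : ℕ) (L : Finset G) : ℕ :=
  Set.ncard {a : Fin (2 * m) → G |
    (∀ i, a i ∈ L) ∧
    altp m (fun i : Fin m => a ⟨i.val, by have := i.isLt; omega⟩) =
      altp m (fun i : Fin m => a ⟨m + i.val, by have := i.isLt; omega⟩)}

/-- `TplusAlt m B` is the number of `2m`-tuples `(b_1, …, b_{2m}) ∈ B^{2m}` with
`b_1 - b_2 + b_3 - ⋯ + b_{m-1} - b_m = b_{m+1} - b_{m+2} + ⋯ + b_{2m-1} - b_{2m}`
(for even `m`). -/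
noncomputable def TplusAlt {M : Type*} [AddCommGroup M] (m : ℕ) (B : Finset M) : ℕ :=
  Set.ncard {b : Fin (2 * m) → M |
    (∀ i, b i ∈ B) ∧
    (∑ i : Fin m, (if (i : ℕ) % 2 = 0 then b ⟨i.val, by have := i.isLt; omega⟩
        else -b ⟨i.val, by have := i.isLt; omega⟩)) =
      (∑ i : Fin m, (if (i : ℕ) % 2 = 0 then b ⟨m + i.val, by have := i.isLt; omega⟩
        else -b ⟨m + i.val, by have := i.isLt; omega⟩))}

/-! The alternating product of maps `x ↦ a i • x + b i` has as slope the alternating product of the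
`a i`, and as constant term a combination `∑ i, c i (b i)` whose coefficients `c i` are
automorphisms depending only on the slopes. The slopes of a solution therefore solve the same
equation in `A`, in which one variable is determined by all the others, and for fixed slopes the
constant terms solve a linear equation over `B` with invertible coefficients.

Such an equation has at most as many solutions as the balanced one: the number of solutions is the
constant coefficient of a product of generating functions in the group algebra of `V`, and
`(x, y) ↦ (x * reflect y).coeff 0` is an inner product. Take a product of `2m` of the generating
functions or their reflections for which the constant coefficient is maximal, and cut it into two
halves. By Cauchy–Schwarz, replacing one half by the reflection of the other keeps it maximal, and
repeating this leads to a product `(F * reflect F) ^ m` with a single `F`. -/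

open Finset Function
open scoped Pointwise

section Folding

variable {R : Type*} [CommMonoid R] {σ : R →* R}

section

variable [DecidableEq R] {S : Finset R}

lemma map_mem_pow (hS : ∀ a ∈ S, σ a ∈ S) {n : ℕ} {x : R} (hx : x ∈ S ^ n) : σ x ∈ S ^ n :=
  pow_subset_pow_left (image_subset_iff.2 hS) (image_pow σ S n ▸ mem_image_of_mem σ hx)

lemma prod_mem_pow_card {ι : Type*} [Fintype ι] {a : ι → R} (ha : ∀ i, a i ∈ S) :
    ∏ i, a i ∈ S ^ Fintype.card ι := by
  simpa [← mem_coe] using Set.finsetProd_mem_finsetProd univ (fun _ ↦ (S : Set R)) a (by simpa)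

lemma mul_map_mem_pow_two_mul (hS : ∀ a ∈ S, σ a ∈ S) {n : ℕ} {x y : R} (hx : x ∈ S ^ n)
    (hy : y ∈ S ^ n) : x * σ y ∈ S ^ (2 * n) := by
  rw [two_mul, pow_add]
  exact mul_mem_mul hx (map_mem_pow hS hy)

/- A product containing `(a * σ a) ^ j` is cut into a half `u` with `j + 1` of the factors `a` and
`σ a` and a half with the other `j - 1`, so that `u * σ u` contains `(a * σ a) ^ (j + 1)`. -/
lemma exists_mul_pow_mul_of_fold (hσ : Involutive σ) (hS : ∀ a ∈ S, σ a ∈ S) {m : ℕ}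
    {P : R → Prop} (hfold : ∀ u ∈ S ^ m, ∀ v ∈ S ^ m, P (u * σ v) → P (u * σ u)) {a y : R}
    (ha : a ∈ S) (hy : y ∈ S ^ (2 * m - 1)) (hP : P (a * y)) {j : ℕ} (hj : 1 ≤ j) (hjm : j ≤ m) :
    ∃ y ∈ S ^ (2 * (m - j)), P ((a * σ a) ^ j * y) := by
  induction j, hj using Nat.le_induction with
  | base =>
    rw [show 2 * m - 1 = m - 1 + m by lia, pow_add, mem_mul] at hy
    obtain ⟨y₁, hy₁, y₂, hy₂, rfl⟩ := hy
    have hu : a * y₁ ∈ S ^ m := by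
      rw [← mul_pow_sub_one (by lia : m ≠ 0)]
      exact mul_mem_mul ha hy₁
    refine ⟨y₁ * σ y₁, mul_map_mem_pow_two_mul hS hy₁ hy₁, ?_⟩
    convert hfold _ hu (σ y₂) (map_mem_pow hS hy₂) (by rwa [hσ, mul_assoc]) using 1
    rw [map_mul, pow_one, mul_mul_mul_comm]
  | succ j hj ih =>
    obtain ⟨y, hy, hP⟩ := ih (by lia)
    rw [show 2 * (m - j) = m - (j + 1) + (m - (j - 1)) by lia, pow_add, mem_mul] at hy
    obtain ⟨y₁, hy₁, y₂, hy₂, rfl⟩ := hy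
    have hu : a ^ j * σ a * y₁ ∈ S ^ m := by
      rw [show m = j + 1 + (m - (j + 1)) by lia, pow_add, pow_succ]
      exact mul_mem_mul (mul_mem_mul (pow_mem_pow ha) (hS a ha)) hy₁
    have hv : a ^ (j - 1) * σ y₂ ∈ S ^ m := by
      rw [show m = j - 1 + (m - (j - 1)) by lia, pow_add]
      exact mul_mem_mul (pow_mem_pow ha) (map_mem_pow hS hy₂)
    have huv : (a * σ a) ^ j * (y₁ * y₂) = a ^ j * σ a * y₁ * σ (a ^ (j - 1) * σ y₂) := by
      rw [map_mul, hσ, map_pow, mul_pow, ← mul_pow_sub_one (by lia : j ≠ 0) (σ a)]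
      simp only [mul_assoc, mul_left_comm, mul_comm]
    refine ⟨y₁ * σ y₁, mul_map_mem_pow_two_mul hS hy₁ hy₁, ?_⟩
    convert hfold _ hu _ hv (huv ▸ hP) using 1
    simp only [map_mul, map_pow, hσ a, mul_pow, pow_succ, mul_assoc, mul_left_comm, mul_comm]

lemma exists_mul_pow_of_fold (hσ : Involutive σ) (hS : ∀ a ∈ S, σ a ∈ S) {m : ℕ} (hm : m ≠ 0)
    {P : R → Prop} (hfold : ∀ u ∈ S ^ m, ∀ v ∈ S ^ m, P (u * σ v) → P (u * σ u)) {x : R}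
    (hx : x ∈ S ^ (2 * m)) (hP : P x) : ∃ a ∈ S, P ((a * σ a) ^ m) := by
  rw [← mul_pow_sub_one (by lia : 2 * m ≠ 0), mem_mul] at hx
  obtain ⟨a, ha, y, hy, rfl⟩ := hx
  obtain ⟨w, hw, hPw⟩ :=
    exists_mul_pow_mul_of_fold hσ hS hfold ha hy hP (Nat.one_le_iff_ne_zero.2 hm) le_rfl
  obtain rfl : w = 1 := by simpa using hw
  exact ⟨a, ha, by rwa [mul_one] at hPw⟩

end

variable {𝕜 : Type*} [Semiring 𝕜] [LinearOrder 𝕜] [IsStrictOrderedRing 𝕜] {τ : R → 𝕜}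

lemma le_map_mul_self_of_le (hτ₀ : ∀ x, 0 ≤ τ x)
    (hτ : ∀ x y, τ (x * σ y) ^ 2 ≤ τ (x * σ x) * τ (y * σ y)) {u v : R} {M : 𝕜} (hM₀ : 0 ≤ M)
    (hM : M ≤ τ (u * σ v)) (hv : τ (v * σ v) ≤ M) : M ≤ τ (u * σ u) := by
  obtain rfl | hM_pos := hM₀.eq_or_lt
  · exact hτ₀ _
  refine le_of_mul_le_mul_right ?_ hM_pos
  calc M * M = M ^ 2 := (sq M).symm
    _ ≤ τ (u * σ v) ^ 2 := pow_le_pow_left₀ hM₀ hM 2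
    _ ≤ τ (u * σ u) * τ (v * σ v) := hτ u v
    _ ≤ τ (u * σ u) * M := mul_le_mul_of_nonneg_left hv (hτ₀ _)

theorem exists_map_le_map_mul_pow [DecidableEq R] (hσ : Involutive σ) (hτ₀ : ∀ x, 0 ≤ τ x)
    (hτ : ∀ x y, τ (x * σ y) ^ 2 ≤ τ (x * σ x) * τ (y * σ y)) {S : Finset R}
    (hS : ∀ a ∈ S, σ a ∈ S) {m : ℕ} (hm : m ≠ 0) {x : R} (hx : x ∈ S ^ (2 * m)) :
    ∃ a ∈ S, τ x ≤ τ ((a * σ a) ^ m) := by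
  obtain ⟨z, hz, hz_max⟩ := exists_max_image (S ^ (2 * m)) τ ⟨x, hx⟩
  have hfold (u) (_ : u ∈ S ^ m) (v) (hv : v ∈ S ^ m) (huv : τ z ≤ τ (u * σ v)) :
      τ z ≤ τ (u * σ u) :=
    le_map_mul_self_of_le hτ₀ hτ (hτ₀ z) huv (hz_max _ (mul_map_mem_pow_two_mul hS hv hv))
  obtain ⟨a, ha, hza⟩ :=
    exists_mul_pow_of_fold (P := fun w ↦ τ z ≤ τ w) hσ hS hm hfold hz le_rfl
  exact ⟨a, ha, (hz_max x hx).trans hza⟩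

end Folding

section ReflectedConvolution

variable {V : Type*} [AddCommGroup V]

/-- The involution `v ↦ -v` of `V`, extended linearly to the additive group algebra of `V`. -/
noncomputable def reflect (𝕜 V : Type*) [Semiring 𝕜] [AddCommGroup V] :
    AddMonoidAlgebra 𝕜 V →+* AddMonoidAlgebra 𝕜 V :=
  AddMonoidAlgebra.mapDomainRingHom 𝕜 (negAddMonoidHom : V →+ V)

lemma reflect_single {𝕜 : Type*} [Semiring 𝕜] (v : V) (r : 𝕜) :
    reflect 𝕜 V (.single v r) = .single (-v) r := by
  simp [reflect]

lemma coeff_reflect {𝕜 : Type*} [Semiring 𝕜] (x : AddMonoidAlgebra 𝕜 V) (v : V) :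
    (reflect 𝕜 V x).coeff (-v) = x.coeff v :=
  Finsupp.mapDomain_apply neg_injective x.coeff v

lemma involutive_reflect {𝕜 : Type*} [Semiring 𝕜] : Involutive (reflect 𝕜 V) := by
  intro x
  rw [← RingHom.comp_apply]
  convert RingHom.id_apply x
  ext <;> simp [reflect_single]

lemma coeff_mul_reflect_zero {𝕜 : Type*} [Semiring 𝕜] (x y : AddMonoidAlgebra 𝕜 V) :
    (x * reflect 𝕜 V y).coeff 0 = x.coeff.sum fun v r ↦ r * y.coeff v := by
  simp [AddMonoidAlgebra.coeff_mul_apply_left, coeff_reflect]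

lemma coeff_mul_reflect_zero_sq_le {𝕜 : Type*} [CommSemiring 𝕜] [LinearOrder 𝕜]
    [IsStrictOrderedRing 𝕜] [ExistsAddOfLE 𝕜] (x y : AddMonoidAlgebra 𝕜 V) :
    (x * reflect 𝕜 V y).coeff 0 ^ 2 ≤
      (x * reflect 𝕜 V x).coeff 0 * (y * reflect 𝕜 V y).coeff 0 := by
  classical
  have coeff_eq_sum {s : Finset V} (x y : AddMonoidAlgebra 𝕜 V) (hs : x.coeff.support ⊆ s) :
      (x * reflect 𝕜 V y).coeff 0 = ∑ v ∈ s, x.coeff v * y.coeff v := by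
    rw [coeff_mul_reflect_zero, Finsupp.sum_of_support_subset _ hs _ (by simp)]
  have hx : x.coeff.support ⊆ x.coeff.support ∪ y.coeff.support := subset_union_left
  have hy : y.coeff.support ⊆ x.coeff.support ∪ y.coeff.support := subset_union_right
  rw [coeff_eq_sum x y hx, coeff_eq_sum x x hx, coeff_eq_sum y y hy]
  simpa only [sq] using sum_mul_sq_le_sq_mul_sq _ x.coeff y.coeff

end ReflectedConvolution

section SolutionCount

variable {V α ι κ : Type*} [AddCommGroup V] [Fintype ι] [Fintype κ]

/-- The element `∑ b ∈ B, X ^ (f b)` of the additive group algebra of `V`, the generating function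
of the values of `f` on `B`. -/
noncomputable def genFun (B : Finset α) (f : α → V) : AddMonoidAlgebra ℕ V :=
  ∑ b ∈ B, .single (f b) 1

lemma reflect_genFun (B : Finset α) (f : α → V) : reflect ℕ V (genFun B f) = genFun B (-f) := by
  simp [genFun, reflect_single]

lemma prod_genFun [DecidableEq ι] (B : Finset α) (f : ι → α → V) :
    ∏ i, genFun B (f i) = ∑ b ∈ Fintype.piFinset fun _ ↦ B, .single (∑ i, f i (b i)) 1 := by
  simp only [genFun, prod_univ_sum, AddMonoidAlgebra.prod_single, prod_const_one]

variable [DecidableEq V] [DecidableEq ι] [DecidableEq κ]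

/-- The number of solutions of `∑ i, f i (x i) = ∑ j, g j (y j)` with all `x i` and `y j` in `B`. -/
def solutionCount (B : Finset α) (f : ι → α → V) (g : κ → α → V) : ℕ :=
  #{z ∈ (Fintype.piFinset fun _ : ι ↦ B) ×ˢ (Fintype.piFinset fun _ : κ ↦ B) |
    ∑ i, f i (z.1 i) = ∑ j, g j (z.2 j)}

lemma coeff_prod_genFun_mul_reflect (B : Finset α) (f : ι → α → V) (g : κ → α → V) :
    ((∏ i, genFun B (f i)) * reflect ℕ V (∏ j, genFun B (g j))).coeff 0 = solutionCount B f g := by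
  simp only [prod_genFun, map_sum, reflect_single, sum_mul_sum, AddMonoidAlgebra.single_mul_single,
    mul_one, solutionCount, ← sub_eq_add_neg, card_filter, sum_product, AddMonoidAlgebra.coeff_sum,
    Finsupp.finsetSum_apply, AddMonoidAlgebra.coeff_single, Finsupp.single_apply, sub_eq_zero]

lemma solutionCount_self_congr_neg (B : Finset α) {f g : ι → α → V}
    (h : ∀ i, f i = g i ∨ f i = -g i) : solutionCount B f f = solutionCount B g g := by
  rw [← coeff_prod_genFun_mul_reflect, ← coeff_prod_genFun_mul_reflect, map_prod, map_prod,
    ← prod_mul_distrib, ← prod_mul_distrib]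
  congr 2
  refine prod_congr rfl fun i _ ↦ ?_
  obtain hi | hi := h i
  · rw [hi]
  · rw [hi, reflect_genFun, reflect_genFun, neg_neg, mul_comm]

lemma solutionCount_comp_addEquiv {W : Type*} [AddCommGroup W] [DecidableEq W] (B : Finset α)
    (f : ι → α → V) (g : κ → α → V) (e : V ≃+ W) :
    solutionCount B (fun i ↦ e ∘ f i) (fun j ↦ e ∘ g j) = solutionCount B f g := by
  simp only [solutionCount, comp_apply, ← map_sum, e.injective.eq_iff]

theorem exists_solutionCount_le [Nonempty ι] (B : Finset α) (f g : ι → α → V) :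
    ∃ h ∈ Set.range f ∪ Set.range g,
      solutionCount B f g ≤ solutionCount B (fun _ : ι ↦ h) (fun _ : ι ↦ h) := by
  classical
  let T : Finset (AddMonoidAlgebra ℕ V) :=
    univ.image (fun i ↦ genFun B (f i)) ∪ univ.image (fun i ↦ genFun B (g i))
  let S := T ∪ T.image (reflect ℕ V)
  have hS : ∀ a ∈ S, reflect ℕ V a ∈ S := by
    intro a ha
    obtain ha | ha := mem_union.1 ha
    · exact mem_union_right _ (mem_image_of_mem _ ha)
    · obtain ⟨t, ht, rfl⟩ := mem_image.1 ha
      exact mem_union_left _ (by rwa [involutive_reflect])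
  have hmem : (∏ i, genFun B (f i)) * reflect ℕ V (∏ i, genFun B (g i)) ∈
      S ^ (2 * Fintype.card ι) :=
    mul_map_mem_pow_two_mul (σ := (reflect ℕ V : AddMonoidAlgebra ℕ V →* AddMonoidAlgebra ℕ V)) hS
      (prod_mem_pow_card fun i ↦ by simp [S, T]) (prod_mem_pow_card fun i ↦ by simp [S, T])
  obtain ⟨a, ha, hle⟩ := exists_map_le_map_mul_pow (τ := fun x ↦ x.coeff 0)
    involutive_reflect (fun _ ↦ zero_le) coeff_mul_reflect_zero_sq_le hS Fintype.card_ne_zero hmem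
  obtain ⟨t, ht, hat⟩ : ∃ t ∈ T, a * reflect ℕ V a = t * reflect ℕ V t := by
    obtain ha | ha := mem_union.1 ha
    · exact ⟨a, ha, rfl⟩
    · obtain ⟨t, ht, rfl⟩ := mem_image.1 ha
      exact ⟨t, ht, by rw [involutive_reflect, mul_comm]⟩
  obtain ⟨h, hh, rfl⟩ : ∃ h ∈ Set.range f ∪ Set.range g, genFun B h = t := by
    simpa [T, or_and_right, exists_or] using ht
  refine ⟨h, hh, ?_⟩
  rw [← coeff_prod_genFun_mul_reflect, ← coeff_prod_genFun_mul_reflect]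
  simpa [mul_pow, hat] using hle

end SolutionCount

section Halves

lemma ncard_setOf_halves {α : Type*} (m : ℕ) (s : Finset α)
    (r : (Fin m → α) → (Fin m → α) → Prop) [DecidableRel r] :
    Set.ncard {a : Fin (2 * m) → α | (∀ i, a i ∈ s) ∧
      r (fun i ↦ a ⟨i.val, by lia⟩) (fun i ↦ a ⟨m + i.val, by lia⟩)} =
      #{x ∈ (Fintype.piFinset fun _ : Fin m ↦ s) ×ˢ (Fintype.piFinset fun _ : Fin m ↦ s) |
        r x.1 x.2} := by
  let e : (Fin (2 * m) → α) ≃ (Fin m → α) × (Fin m → α) :=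
    ((finCongr (two_mul m)).arrowCongr (Equiv.refl α)).trans (Fin.appendEquiv m m).symm
  have forall_mem_iff (a : Fin (2 * m) → α) :
      (∀ i, a i ∈ s) ↔ (∀ i, (e a).1 i ∈ s) ∧ ∀ i, (e a).2 i ∈ s := by
    rw [← (finCongr (two_mul m).symm).forall_congr_right, Fin.forall_fin_add]
    rfl
  rw [← Set.ncard_coe_finset, ← Set.ncard_preimage_of_injective_subset_range e.injective (by simp)]
  congr 1
  ext a
  simp only [Set.mem_ofPred_eq, forall_mem_iff, Set.mem_preimage, mem_coe, mem_filter, mem_product,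
    Fintype.mem_piFinset]
  rfl

end Halves

section Alternating

variable {G : Type*} [Group G]

lemma altp_succ (m : ℕ) (g : Fin (m + 1) → G) :
    altp (m + 1) g = altp m (fun i ↦ g i.castSucc) *
      (if m % 2 = 0 then g (Fin.last m) else (g (Fin.last m))⁻¹) := by
  simp [altp, List.finRange_succ_last, comp_def]

lemma Tmul_eq_card [DecidableEq G] (m : ℕ) (L : Finset G) :
    Tmul m L =
      #{x ∈ (Fintype.piFinset fun _ : Fin m ↦ L) ×ˢ (Fintype.piFinset fun _ : Fin m ↦ L) |
        altp m x.1 = altp m x.2} :=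
  ncard_setOf_halves m L fun x y ↦ altp m x = altp m y

theorem Tmul_le_card_pow (L : Finset G) {m : ℕ} (hm : m ≠ 0) : Tmul m L ≤ #L ^ (2 * m - 1) := by
  classical
  obtain ⟨n, rfl⟩ := Nat.exists_eq_succ_of_ne_zero hm
  have hcard : #((Fintype.piFinset fun _ : Fin (n + 1) ↦ L) ×ˢ
      (Fintype.piFinset fun _ : Fin n ↦ L)) = #L ^ (2 * (n + 1) - 1) := by
    simp [← pow_add, show 2 * (n + 1) - 1 = n + 1 + n by lia]
  rw [Tmul_eq_card, ← hcard]
  refine card_le_card_of_injOn (fun x ↦ (x.1, fun i ↦ x.2 i.castSucc)) ?_ ?_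
  · intro x hx
    simp only [coe_filter, coe_product, mem_product, Fintype.mem_piFinset, Set.mem_ofPred_eq,
      Set.mem_prod, mem_coe] at hx ⊢
    exact ⟨hx.1.1, fun i ↦ hx.1.2 i.castSucc⟩
  · rintro ⟨x, y⟩ hxy ⟨x', y'⟩ hxy' h
    simp only [Prod.mk.injEq] at h
    obtain ⟨rfl, hinit⟩ := h
    have halt : altp (n + 1) y = altp (n + 1) y' :=
      (mem_filter.1 hxy).2.symm.trans (mem_filter.1 hxy').2
    have hlast : y (Fin.last n) = y' (Fin.last n) := by
      rw [altp_succ, altp_succ, hinit, mul_right_inj] at halt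
      split_ifs at halt
      exacts [halt, inv_injective halt]
    have hy : y = y' := funext (Fin.lastCases hlast (congrFun hinit))
    rw [hy]

end Alternating

section Affine

variable {V : Type*} [AddCommGroup V]

lemma TplusAlt_eq_solutionCount [DecidableEq V] (m : ℕ) (B : Finset V) :
    TplusAlt m B = solutionCount B (fun _ : Fin m ↦ id) (fun _ : Fin m ↦ id) := by
  rw [solutionCount_self_congr_neg (g := fun i : Fin m ↦ if (i : ℕ) % 2 = 0 then id else -id)]
  · refine (ncard_setOf_halves m B fun x y ↦
      ∑ i : Fin m, (if (i : ℕ) % 2 = 0 then x i else -x i) =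
        ∑ i : Fin m, (if (i : ℕ) % 2 = 0 then y i else -y i)).trans ?_
    simp only [solutionCount, ite_apply, id_eq, Pi.neg_apply]
  · intro i
    split_ifs
    · exact .inl rfl
    · exact .inr (neg_neg id).symm

variable {Γ : Type*} [Group Γ] [DistribMulAction Γ V]

lemma inv_perm_apply_of_affine {a : Γ} {b : V} {g : Equiv.Perm V} (hg : ∀ x, g x = a • x + b)
    (x : V) : g⁻¹ x = a⁻¹ • (x - b) := by
  rw [Equiv.Perm.inv_eq_iff_eq, hg, smul_inv_smul, sub_add_cancel]

lemma exists_altp_apply_eq {m : ℕ} (a : Fin m → Γ) :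
    ∃ c : Fin m → V ≃+ V, ∀ (b : Fin m → V) (g : Fin m → Equiv.Perm V),
      (∀ i x, g i x = a i • x + b i) → ∀ x, altp m g x = altp m a • x + ∑ i, c i (b i) := by
  induction m with
  | zero => exact ⟨fun _ ↦ .refl V, fun b g _ x ↦ by simp [altp]⟩
  | succ m ih =>
    obtain ⟨c, hc⟩ := ih fun i ↦ a i.castSucc
    let P := altp m fun i ↦ a i.castSucc
    let l := a (Fin.last m)
    refine ⟨Fin.snoc (α := fun _ ↦ V ≃+ V) c
      (if m % 2 = 0 then DistribMulAction.toAddEquiv V P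
        else (AddEquiv.neg V).trans (DistribMulAction.toAddEquiv V (P * l⁻¹))), fun b g hg x ↦ ?_⟩
    have hinit := hc (fun i ↦ b i.castSucc) (fun i ↦ g i.castSucc) fun i ↦ hg i.castSucc
    rw [altp_succ, altp_succ, Equiv.Perm.mul_apply, hinit, Fin.sum_univ_castSucc]
    simp only [Fin.snoc_last, Fin.snoc_castSucc]
    split_ifs
    · simp only [hg, P, mul_smul, smul_add, DistribMulAction.toAddEquiv_apply]
      abel
    · simp [inv_perm_apply_of_affine (hg _), P, l, mul_smul, sub_eq_add_neg, add_assoc, add_comm]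

lemma eq_and_eq_of_smul_add_eq [FaithfulSMul Γ V] {a a' : Γ} {b b' : V}
    (h : ∀ x, a • x + b = a' • x + b') : a = a' ∧ b = b' := by
  have hb : b = b' := by simpa using h 0
  exact ⟨eq_of_smul_eq_smul fun x ↦ by simpa [hb] using h x, hb⟩

lemma exists_addEquiv_of_altp_eq [FaithfulSMul Γ V] {m : ℕ} (a a' : Fin m → Γ) :
    ∃ c c' : Fin m → V ≃+ V, ∀ (b b' : Fin m → V) (g g' : Fin m → Equiv.Perm V),
      (∀ i x, g i x = a i • x + b i) → (∀ i x, g' i x = a' i • x + b' i) →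
      altp m g = altp m g' → altp m a = altp m a' ∧ ∑ i, c i (b i) = ∑ i, c' i (b' i) := by
  obtain ⟨c, hc⟩ := exists_altp_apply_eq (V := V) a
  obtain ⟨c', hc'⟩ := exists_altp_apply_eq (V := V) a'
  refine ⟨c, c', fun b b' g g' hg hg' h ↦ eq_and_eq_of_smul_add_eq fun x ↦ ?_⟩
  rw [← hc b g hg, ← hc' b' g' hg', h]

lemma solutionCount_addEquiv_le [DecidableEq V] (B : Finset V) {m : ℕ} (hm : m ≠ 0)
    (c c' : Fin m → V ≃+ V) :
    solutionCount B (fun i ↦ ⇑(c i)) (fun i ↦ ⇑(c' i)) ≤ TplusAlt m B := by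
  have : NeZero m := ⟨hm⟩
  obtain ⟨h, hh, hle⟩ := exists_solutionCount_le B (fun i ↦ ⇑(c i)) (fun i ↦ ⇑(c' i))
  obtain ⟨e, rfl⟩ : ∃ e : V ≃+ V, ⇑e = h := by
    obtain ⟨i, rfl⟩ | ⟨i, rfl⟩ := hh
    exacts [⟨c i, rfl⟩, ⟨c' i, rfl⟩]
  rw [TplusAlt_eq_solutionCount]
  exact hle.trans_eq (solutionCount_comp_addEquiv B (fun _ ↦ id) (fun _ ↦ id) e)

lemma card_filter_slope_eq_le_TplusAlt [FaithfulSMul Γ V] [DecidableEq Γ]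
    [DecidableEq (Equiv.Perm V)] {L : Finset (Equiv.Perm V)} {B : Finset V}
    {slope : Equiv.Perm V → Γ} {intercept : Equiv.Perm V → V} (hB : ∀ l ∈ L, intercept l ∈ B)
    (hL : ∀ l ∈ L, ∀ x, l x = slope l • x + intercept l) {m : ℕ} (hm : m ≠ 0)
    (a a' : Fin m → Γ) :
    #{z ∈ (Fintype.piFinset fun _ : Fin m ↦ L) ×ˢ (Fintype.piFinset fun _ : Fin m ↦ L) |
      altp m z.1 = altp m z.2 ∧ slope ∘ z.1 = a ∧ slope ∘ z.2 = a'} ≤ TplusAlt m B := by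
  classical
  obtain ⟨c, c', hc⟩ := exists_addEquiv_of_altp_eq (V := V) a a'
  refine le_trans ?_ (solutionCount_addEquiv_le B hm c c')
  refine card_le_card_of_injOn (fun z ↦ (intercept ∘ z.1, intercept ∘ z.2)) ?_ ?_
  · rintro ⟨x, y⟩ hxy
    simp only [coe_filter, mem_product, Fintype.mem_piFinset, Set.mem_ofPred_eq] at hxy ⊢
    obtain ⟨⟨hx, hy⟩, halt, rfl, rfl⟩ := hxy
    exact ⟨⟨fun i ↦ hB _ (hx i), fun i ↦ hB _ (hy i)⟩,
      (hc _ _ x y (fun i ↦ hL _ (hx i)) (fun i ↦ hL _ (hy i)) halt).2⟩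
  · have eq_of_comp_eq {x x' : Fin m → Equiv.Perm V} (hx : ∀ i, x i ∈ L) (hx' : ∀ i, x' i ∈ L)
        (hslope : slope ∘ x = slope ∘ x') (hintercept : intercept ∘ x = intercept ∘ x') :
        x = x' := by
      ext i v
      rw [hL _ (hx i), hL _ (hx' i), show slope (x i) = slope (x' i) from congrFun hslope i,
        show intercept (x i) = intercept (x' i) from congrFun hintercept i]
    rintro ⟨x, y⟩ hxy ⟨x', y'⟩ hxy' h
    simp only [coe_filter, mem_product, Fintype.mem_piFinset, Set.mem_ofPred_eq, Prod.mk.injEq]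
      at hxy hxy' h ⊢
    obtain ⟨⟨hx, hy⟩, -, rfl, rfl⟩ := hxy
    obtain ⟨⟨hx', hy'⟩, -, hslope, hslope'⟩ := hxy'
    exact ⟨eq_of_comp_eq hx hx' hslope.symm h.1, eq_of_comp_eq hy hy' hslope'.symm h.2⟩

theorem Tmul_le_Tmul_mul_TplusAlt [FaithfulSMul Γ V] {A : Finset Γ} {B : Finset V}
    {L : Finset (Equiv.Perm V)} (hL : ∀ l ∈ L, ∃ a ∈ A, ∃ b ∈ B, ∀ x, l x = a • x + b) {m : ℕ}
    (hm : m ≠ 0) : Tmul m L ≤ Tmul m A * TplusAlt m B := by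
  classical
  choose! slope hA intercept hB hL using hL
  rw [Tmul_eq_card, Tmul_eq_card, mul_comm]
  refine card_le_mul_card_image_of_maps_to (f := fun z ↦ (slope ∘ z.1, slope ∘ z.2)) ?_ _ ?_
  · rintro ⟨x, y⟩ hxy
    simp only [mem_filter, mem_product, Fintype.mem_piFinset] at hxy ⊢
    obtain ⟨⟨hx, hy⟩, halt⟩ := hxy
    obtain ⟨c, c', hc⟩ := exists_addEquiv_of_altp_eq (V := V) (slope ∘ x) (slope ∘ y)
    exact ⟨⟨fun i ↦ hA _ (hx i), fun i ↦ hA _ (hy i)⟩,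
      (hc _ _ x y (fun i ↦ hL _ (hx i)) (fun i ↦ hL _ (hy i)) halt).1⟩
  · rintro ⟨a, a'⟩ _
    simpa only [filter_filter, Prod.mk.injEq] using
      card_filter_slope_eq_le_TplusAlt hB hL hm a a'

end Affine

theorem stmt4_general {K V : Type*} [AddCommGroup V] [DistribSMul K V] {A : Finset K}
    {B : Finset V} {L : Finset (Equiv.Perm V)}
    (hL : ∀ l ∈ L, ∃ a ∈ A, ∃ b ∈ B, ∀ x, l x = a • x + b) {k : ℕ} (hk : k ≠ 0) :
    Tmul k L ≤ #A ^ (2 * k - 1) * TplusAlt k B := by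
  classical
  -- `1` is a junk value: slopes of permutations act bijectively.
  let φ (a : K) : V ≃ₗ[ℤ] V :=
    if h : Bijective (DistribSMul.toAddMonoidHom V a) then
      (AddEquiv.ofBijective (DistribSMul.toAddMonoidHom V a) h).toIntLinearEquiv
    else 1
  have hL' : ∀ l ∈ L, ∃ a ∈ A.image φ, ∃ b ∈ B, ∀ x, l x = a • x + b := by
    intro l hl
    obtain ⟨a, ha, b, hb, hlx⟩ := hL l hl
    have ha_bij : Bijective (DistribSMul.toAddMonoidHom V a) := by
      convert (l.trans (Equiv.subRight b)).bijective
      ext x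
      simp [hlx]
    refine ⟨φ a, mem_image_of_mem φ ha, b, hb, fun x ↦ ?_⟩
    simp [φ, ha_bij, hlx]
  calc Tmul k L ≤ Tmul k (A.image φ) * TplusAlt k B := Tmul_le_Tmul_mul_TplusAlt hL' hk
    _ ≤ #(A.image φ) ^ (2 * k - 1) * TplusAlt k B := by
      gcongr
      exact Tmul_le_card_pow _ hk
    _ ≤ #A ^ (2 * k - 1) * TplusAlt k B := by
      gcongr
      exact card_image_le

theorem stmt4 :
    ∀ (p : ℕ) [Fact p.Prime],
      ∀ A B : Finset (ZMod p), A.Nonempty → B.Nonempty →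
        (∀ a ∈ A, a ≠ 0) → (∀ b ∈ B, b ≠ 0) →
        ∀ L : Finset (Equiv.Perm (ZMod p)),
          (∀ l : Equiv.Perm (ZMod p), l ∈ L ↔ ∃ a ∈ A, ∃ b ∈ B, ∀ x, l x = a * x + b) →
          L.card = A.card * B.card →
          ∀ k : ℕ, 2 ≤ k → Even k →
            Tmul k L ≤ A.card ^ (2 * k - 1) * TplusAlt k B := by
  intro p _ A B _ _ _ _ L hL _ k hk _
  exact stmt4_general (fun l hl ↦ (hL l).1 hl) (by lia)
end
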